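/- arXiv:1307.8111 — 4 statements merged into one kernel-verified Lean document; each statement's English description precedes it below -/
import Mathlib

section
/- Let C₁ and C₂ be Cantor sets in ℝ³ with C₁ contained in the closed unit ball centered at (-1,0,0), C₂ contained in the closed unit ball centered at (1,0,0), and C₁ ∩ C₂ = {(0,0,0)}. If ℝ³ \ C₂ is simply connected, then the fundamental group of ℝ³ \ (C₁ ∪ C₂) (at a basepoint in the complement, e.g. (0,0,5)) is isomorphic to the fundamental group of ℝ³ \ C₁ (at the same basepoint). -/
open Metric Set

noncomputable section

/-- ℝ³ as Euclidean space. -/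
abbrev R3 : Type := EuclideanSpace ℝ (Fin 3)

/-- The point (a, b, c) of ℝ³. -/
def pt (a b c : ℝ) : R3 := (WithLp.equiv 2 (Fin 3 → ℝ)).symm ![a, b, c]

/-- A Cantor set in ℝ³: a nonempty compact perfect totally disconnected subset. -/
def IsCantorSubset (C : Set R3) : Prop :=
  C.Nonempty ∧ IsCompact C ∧ Perfect C ∧ IsTotallyDisconnected C


open unitInterval in
theorem aux_square {X : Type*} [TopologicalSpace X] {a b a' b' : X} (γ : Path a b)
    (γ' : Path a' b') (da : Path a a') (db : Path b b') (H : I × I → X) (hH : Continuous H)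
    (h0 : ∀ t, H (t, 0) = γ t) (h1 : ∀ t, H (t, 1) = γ' t)
    (hl : ∀ s, H (0, s) = da s) (hr : ∀ s, H (1, s) = db s) :
    (γ.trans db).Homotopic (da.trans γ') := by
  let bot : Path ((0, 0) : I × I) (1, 0) := ⟨⟨fun t => (t, 0), by fun_prop⟩, rfl, rfl⟩
  let top : Path ((0, 1) : I × I) (1, 1) := ⟨⟨fun t => (t, 1), by fun_prop⟩, rfl, rfl⟩
  let lef : Path ((0, 0) : I × I) (0, 1) := ⟨⟨fun t => (0, t), by fun_prop⟩, rfl, rfl⟩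
  let rig : Path ((1, 0) : I × I) (1, 1) := ⟨⟨fun t => (1, t), by fun_prop⟩, rfl, rfl⟩
  have hc : ContractibleSpace I := (convex_Icc (0 : ℝ) 1).contractibleSpace ⟨0, by simp⟩
  have key : (bot.trans rig).Homotopic (lef.trans top) := by
    have : SimplyConnectedSpace (I × I) := inferInstance
    exact SimplyConnectedSpace.paths_homotopic _ _
  have key2 := key.map ⟨H, hH⟩
  have ea : a = H (0, 0) := by rw [h0, γ.source]
  have eb : b' = H (1, 1) := by rw [h1, γ'.target]
  have key3 := key2.pathCast ea eb
  have e1 : ((bot.trans rig).map hH).cast ea eb = γ.trans db := by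
    ext t
    simp only [Path.cast_coe, Path.map_coe, Function.comp, Path.trans_apply]
    split_ifs
    · exact h0 _
    · exact hr _
  have e2 : ((lef.trans top).map hH).cast ea eb = da.trans γ' := by
    ext t
    simp only [Path.cast_coe, Path.map_coe, Function.comp, Path.trans_apply]
    split_ifs
    · exact hl _
    · exact h1 _
  rw [← e1, ← e2]
  exact key3

open unitInterval in
theorem aux_subdivide {X : Type*} [TopologicalSpace X] (ρ : C(X, X))
    (δ : ∀ x, Path x (ρ x)) (U V : Set X) (hU : IsOpen U) (hV : IsOpen V)
    (hUV : ∀ x, x ∈ U ∨ x ∈ V)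
    (hPU : ∀ (a b : X) (γ : Path a b), (∀ t, γ t ∈ U) →
      (γ.trans (δ b)).Homotopic ((δ a).trans (γ.map ρ.continuous)))
    (hPV : ∀ (a b : X) (γ : Path a b), (∀ t, γ t ∈ V) →
      (γ.trans (δ b)).Homotopic ((δ a).trans (γ.map ρ.continuous)))
    (a b : X) (γ : Path a b) :
    (γ.trans (δ b)).Homotopic ((δ a).trans (γ.map ρ.continuous)) := by
  have hcast : ∀ (a b a' b' : X) (γ : Path a b) (ha : a' = a) (hb : b' = b),
      ((γ.cast ha hb).trans (δ b')).Homotopic ((δ a').trans ((γ.cast ha hb).map ρ.continuous)) →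
      (γ.trans (δ b)).Homotopic ((δ a).trans (γ.map ρ.continuous)) := by
    intro a b a' b' γ ha hb h
    subst ha hb
    exact h
  obtain ⟨t, ht0, htm, ⟨n, hn⟩, hsub⟩ := exists_monotone_Icc_subset_open_cover_unitInterval
    (c := fun i : Bool => γ ⁻¹' (if i then U else V))
    (by intro i; cases i <;> simp <;> [exact hV.preimage γ.continuous; exact hU.preimage γ.continuous])
    (by
      intro s _
      rcases hUV (γ s) with h | h
      · exact mem_iUnion.2 ⟨true, by simpa using h⟩
      · exact mem_iUnion.2 ⟨false, by simpa using h⟩)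
  have hstep : ∀ m, ((γ.subpath (t m) (t (m + 1))).trans (δ _)).Homotopic
      ((δ _).trans ((γ.subpath (t m) (t (m + 1))).map ρ.continuous)) := by
    intro m
    obtain ⟨i, hi⟩ := hsub m
    have hr : ∀ s, ∃ u ∈ Icc (t m) (t (m + 1)), γ u = γ.subpath (t m) (t (m + 1)) s := by
      intro s
      have : γ.subpath (t m) (t (m + 1)) s ∈ range (γ.subpath (t m) (t (m + 1))) := ⟨s, rfl⟩
      rw [Path.range_subpath_of_le _ _ _ (htm (Nat.le_succ m))] at this
      exact this
    cases i
    · apply hPV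
      intro s
      obtain ⟨u, hu, e⟩ := hr s
      rw [← e]
      simpa using hi hu
    · apply hPU
      intro s
      obtain ⟨u, hu, e⟩ := hr s
      rw [← e]
      simpa using hi hu
  have hall : ∀ m, ((γ.subpath (t 0) (t m)).trans (δ _)).Homotopic
      ((δ _).trans ((γ.subpath (t 0) (t m)).map ρ.continuous)) := by
    intro m
    induction m with
    | zero =>
      rw [Path.subpath_self]
      exact (Path.Homotopic.refl_trans _).trans (Path.Homotopic.trans_refl (δ (γ (t 0)))).symm
    | succ m ih =>
      have hc : ((γ.subpath (t 0) (t m)).trans (γ.subpath (t m) (t (m + 1)))).Homotopic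
        (γ.subpath (t 0) (t (m + 1))) := ⟨Path.Homotopy.subpathTransSubpath _ _ _ _⟩
      have s1 := (hc.symm.hcomp (Path.Homotopic.refl (δ (γ (t (m+1))))))
      refine s1.trans ?_
      refine (Path.Homotopic.trans_assoc _ _ _).trans ?_
      refine ((Path.Homotopic.refl _).hcomp (hstep m)).trans ?_
      refine (Path.Homotopic.trans_assoc _ _ _).symm.trans ?_
      refine (ih.hcomp (Path.Homotopic.refl _)).trans ?_
      refine (Path.Homotopic.trans_assoc _ _ _).trans ?_
      refine (Path.Homotopic.refl _).hcomp ?_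
      have := hc.map ρ
      rw [Path.map_trans] at this
      exact this
  have h1 := hall n
  rw [ht0, hn n le_rfl, Path.subpath_zero_one] at h1
  exact hcast _ _ _ _ γ _ _ h1

theorem aux_iso {X Y : Type*} [TopologicalSpace X] [TopologicalSpace Y] (j : C(X, Y))
    (r : C(Y, X)) (x : X) (y : Y) (hj : j x = y) (hr : r y = x)
    (hX : ∀ γ : Path x x, ∃ γ' : Path x x, γ.Homotopic γ' ∧ ∀ t, γ' t = r (j (γ t)))
    (hY : ∀ γ : Path y y, ∃ γ' : Path y y, γ.Homotopic γ' ∧ ∀ t, γ' t = j (r (γ t))) :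
    Nonempty (FundamentalGroup X x ≃* FundamentalGroup Y y) := by
  refine ⟨MonoidHom.toMulEquiv (FundamentalGroup.mapOfEq j hj) (FundamentalGroup.mapOfEq r hr)
    ?_ ?_⟩
  · ext p
    induction p using Path.Homotopic.Quotient.ind with
    | mk γ =>
    obtain ⟨γ', h, e⟩ := hX γ
    simp only [MonoidHom.comp_apply, MonoidHom.id_apply]
    rw [FundamentalGroup.mapOfEq_apply, FundamentalGroup.mapOfEq_apply]
    rw [← Path.Homotopic.Quotient.mk_map, ← Path.Homotopic.Quotient.mk_cast,
      ← Path.Homotopic.Quotient.mk_map, ← Path.Homotopic.Quotient.mk_cast,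
      Path.Homotopic.Quotient.eq.2 h]
    congr 1
    ext t
    simp [e]
  · ext p
    induction p using Path.Homotopic.Quotient.ind with
    | mk γ =>
    obtain ⟨γ', h, e⟩ := hY γ
    simp only [MonoidHom.comp_apply, MonoidHom.id_apply]
    rw [FundamentalGroup.mapOfEq_apply, FundamentalGroup.mapOfEq_apply]
    rw [← Path.Homotopic.Quotient.mk_map, ← Path.Homotopic.Quotient.mk_cast,
      ← Path.Homotopic.Quotient.mk_map, ← Path.Homotopic.Quotient.mk_cast,
      Path.Homotopic.Quotient.eq.2 h]
    congr 1
    ext t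
    simp [e]

theorem aux_homeo {X Y : Type*} [TopologicalSpace X] [TopologicalSpace Y] (f : X ≃ₜ Y)
    (x : X) (y : Y) (h : f x = y) :
    Nonempty (FundamentalGroup X x ≃* FundamentalGroup Y y) := by
  refine aux_iso ⟨f, f.continuous⟩ ⟨f.symm, f.symm.continuous⟩ x y h (by simp [← h]) ?_ ?_
  · intro γ
    exact ⟨γ, Path.Homotopic.refl _, fun t => by simp⟩
  · intro γ
    exact ⟨γ, Path.Homotopic.refl _, fun t => by simp⟩

/-- Replace the first coordinate of `y` by `t`. -/
def sh (y : R3) (t : ℝ) : R3 := y + (t - y 0) • EuclideanSpace.single 0 1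

theorem sh_zero (y : R3) (t : ℝ) : (sh y t) 0 = t := by
  simp [sh]

theorem sh_self (y : R3) : sh y (y 0) = y := by
  simp [sh]

theorem sh_of_eq (y : R3) (t : ℝ) (h : t = y 0) : sh y t = y := by
  rw [h, sh_self]

theorem continuous_sh {α : Type*} [TopologicalSpace α] {f : α → R3} {g : α → ℝ}
    (hf : Continuous f) (hg : Continuous g) : Continuous (fun a => sh (f a) (g a)) := by
  unfold sh
  have : Continuous fun a => f a 0 := by fun_prop
  fun_prop

open unitInterval in
theorem aux_main (A₁ A₂ : Set R3) (h1 : ∀ z ∈ A₁, z 0 ≤ 0) (h2 : ∀ z ∈ A₂, z ∈ A₁ ∨ 1 / 2 ≤ z 0)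
    (hsc : SimplyConnectedSpace ↥(A₂ᶜ)) (b : R3) (hb0 : b 0 ≤ 0)
    (hb : b ∈ (A₁ ∪ A₂)ᶜ) (hb' : b ∈ A₁ᶜ) :
    Nonempty (FundamentalGroup ↥((A₁ ∪ A₂)ᶜ) ⟨b, hb⟩ ≃* FundamentalGroup ↥(A₁ᶜ) ⟨b, hb'⟩) := by
  have n1 : ∀ z : R3, 0 < z 0 → z ∉ A₁ := fun z hz hA => absurd (h1 z hA) (not_le.2 hz)
  have n2 : ∀ z : R3, 0 < z 0 → z 0 < 1 / 2 → z ∉ A₂ := fun z hz hz' hA => by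
    rcases h2 z hA with h | h
    · exact n1 z hz h
    · linarith
  let j : C(↥((A₁ ∪ A₂)ᶜ), ↥(A₁ᶜ)) :=
    ⟨fun x => ⟨x.1, fun h => x.2 (Or.inl h)⟩, by fun_prop⟩
  -- the retraction onto the left half space
  have hr : ∀ y : ↥(A₁ᶜ), sh y.1 (min (y.1 0) (1 / 4)) ∈ (A₁ ∪ A₂)ᶜ := by
    intro y
    rcases le_total (y.1 0) (1 / 4) with h | h
    · rw [min_eq_left h, sh_self]
      rintro (h' | h')
      · exact y.2 h'
      · rcases h2 _ h' with h'' | h''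
        · exact y.2 h''
        · linarith
    · rw [min_eq_right h]
      rintro (h' | h')
      · exact n1 _ (by rw [sh_zero]; norm_num) h'
      · exact n2 _ (by rw [sh_zero]; norm_num) (by rw [sh_zero]; norm_num) h'
  let r : C(↥(A₁ᶜ), ↥((A₁ ∪ A₂)ᶜ)) := ⟨fun y => ⟨_, hr y⟩, by
    refine Continuous.subtype_mk (continuous_sh (by fun_prop) (by fun_prop)) _⟩
  -- the straight line homotopy
  let ln : R3 → ℝ → ℝ := fun y s => y 0 + s * (min (y 0) (1 / 4) - y 0)
  have ln_le : ∀ y s, y 0 ≤ 1 / 4 → ln y s = y 0 := by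
    intro y s h
    simp only [ln]
    rw [min_eq_left h]; ring
  have ln_ge : ∀ y, ∀ s : I, 1 / 4 ≤ y 0 → 1 / 4 ≤ ln y s ∧ ln y s ≤ y 0 := by
    intro y s h
    simp only [ln]
    rw [min_eq_right h]
    have := s.2.1
    have := s.2.2
    constructor <;> nlinarith
  have ln_zero : ∀ y, ln y 0 = y 0 := by intro y; simp [ln]
  have ln_one : ∀ y, ln y 1 = min (y 0) (1 / 4) := by intro y; simp [ln]
  have hlY : ∀ y : R3, y ∉ A₁ → ∀ s : I, sh y (ln y s) ∉ A₁ := by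
    intro y hy s
    rcases le_total (y 0) (1 / 4) with h | h
    · rwa [ln_le y s h, sh_self]
    · apply n1
      rw [sh_zero]
      linarith [(ln_ge y s h).1]
  have hlX : ∀ y : R3, y ∉ A₁ ∪ A₂ → y 0 < 1 / 2 → ∀ s : I, sh y (ln y s) ∉ A₁ ∪ A₂ := by
    rintro y hy hy2 s (h' | h')
    · exact hlY y (fun h => hy (Or.inl h)) s h'
    · rcases le_total (y 0) (1 / 4) with h | h
      · rw [ln_le y s h, sh_self] at h'
        exact hy (Or.inr h')
      · have := ln_ge y s h
        refine n2 _ ?_ ?_ h' <;> rw [sh_zero] <;> linarith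
  have hlc : Continuous fun q : R3 × I => sh q.1 (ln q.1 q.2) := by
    refine continuous_sh (by fun_prop) ?_
    simp only [ln]
    fun_prop
  -- the retraction onto the right half space
  have hτ : ∀ y : ↥(A₂ᶜ), sh y.1 (max (y.1 0) (1 / 8)) ∈ (A₁ ∪ A₂)ᶜ := by
    intro y
    have hm : 1 / 8 ≤ max (y.1 0) (1 / 8) := le_max_right _ _
    rintro (h' | h')
    · exact n1 _ (by rw [sh_zero]; linarith) h'
    · rcases le_total (1 / 8) (y.1 0) with h | h
      · rw [max_eq_left h, sh_self] at h'
        exact y.2 h'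
      · rw [max_eq_right h] at h'
        exact n2 _ (by rw [sh_zero]; norm_num) (by rw [sh_zero]; norm_num) h'
  let τ : C(↥(A₂ᶜ), ↥((A₁ ∪ A₂)ᶜ)) := ⟨fun y => ⟨_, hτ y⟩, by
    refine Continuous.subtype_mk (continuous_sh (by fun_prop) (by fun_prop)) _⟩
  let k : C(↥((A₁ ∪ A₂)ᶜ), ↥(A₂ᶜ)) :=
    ⟨fun x => ⟨x.1, fun h => x.2 (Or.inr h)⟩, by fun_prop⟩
  have hτk : ∀ x : ↥((A₁ ∪ A₂)ᶜ), 1 / 8 ≤ x.1 0 → τ (k x) = x := by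
    intro x hx
    apply Subtype.ext
    change sh x.1 (max (x.1 0) (1 / 8)) = x.1
    rw [max_eq_left hx, sh_self]
  have hτ0 : ∀ y, 1 / 8 ≤ (τ y).1 0 := by
    intro y
    change 1 / 8 ≤ (sh y.1 (max (y.1 0) (1 / 8))) 0
    rw [sh_zero]; exact le_max_right _ _
  have hVh : ∀ (a b : ↥((A₁ ∪ A₂)ᶜ)) (p q : Path a b), (∀ t, 1 / 8 ≤ (p t).1 0) →
      (∀ t, 1 / 8 ≤ (q t).1 0) → p.Homotopic q := by
    intro a b p q hp hq
    have h := (SimplyConnectedSpace.paths_homotopic (p.map k.continuous) (q.map k.continuous)).map τ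
    have ea : a = τ (k a) := (hτk a (by simpa using hp 0)).symm
    have eb : b = τ (k b) := (hτk b (by simpa using hp 1)).symm
    have h' := h.pathCast ea eb
    have e1 : ((p.map k.continuous).map τ.continuous).cast ea eb = p := by
      ext t : 2
      exact hτk _ (hp t)
    have e2 : ((q.map k.continuous).map τ.continuous).cast ea eb = q := by
      ext t : 2
      exact hτk _ (hq t)
    rw [← e1, ← e2]
    exact h'
  let ρ : C(↥((A₁ ∪ A₂)ᶜ), ↥((A₁ ∪ A₂)ᶜ)) := r.comp j
  have hρ : ∀ x, (ρ x).1 = sh x.1 (min (x.1 0) (1 / 4)) := fun x => rfl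
  have hρV : ∀ x, 1 / 8 ≤ x.1 0 → 1 / 8 ≤ (ρ x).1 0 := by
    intro x hx
    rw [hρ, sh_zero]
    exact le_min hx (by norm_num)
  have hδ : ∀ x : ↥((A₁ ∪ A₂)ᶜ), ∃ p : Path x (ρ x),
      (x.1 0 < 1 / 2 → ∀ s, (p s).1 = sh x.1 (ln x.1 s)) ∧
      (1 / 8 ≤ x.1 0 → ∀ s, 1 / 8 ≤ (p s).1 0) := by
    intro x
    by_cases hx : x.1 0 < 1 / 2
    · refine ⟨⟨⟨fun s => ⟨sh x.1 (ln x.1 s), hlX _ x.2 hx s⟩, ?_⟩, ?_, ?_⟩, ?_, ?_⟩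
      · exact Continuous.subtype_mk (hlc.comp (by fun_prop : Continuous fun s : I => (x.1, s))) _
      · apply Subtype.ext
        change sh x.1 (ln x.1 ((0 : I) : ℝ)) = x.1
        rw [show ((0 : I) : ℝ) = 0 from rfl, ln_zero, sh_self]
      · apply Subtype.ext
        change sh x.1 (ln x.1 ((1 : I) : ℝ)) = _
        rw [show ((1 : I) : ℝ) = 1 from rfl, ln_one, hρ]
      · intro _ s; rfl
      · intro h8 s
        change 1 / 8 ≤ (sh x.1 (ln x.1 s)) 0
        rw [sh_zero]
        rcases le_total (x.1 0) (1 / 4) with h | h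
        · rwa [ln_le _ _ h]
        · linarith [(ln_ge _ s h).1]
    · have h8 : 1 / 8 ≤ x.1 0 := by linarith
      have ea : x = τ (k x) := (hτk x h8).symm
      have eb : ρ x = τ (k (ρ x)) := (hτk _ (hρV x h8)).symm
      refine ⟨((PathConnectedSpace.somePath (k x) (k (ρ x))).map τ.continuous).cast ea eb, ?_, ?_⟩
      · intro h; exact absurd h hx
      · intro _ s
        exact hτ0 _
  choose δ hδU hδV using hδ
  have hmain := aux_subdivide ρ δ {x | x.1 0 < 1 / 2} {x | 1 / 8 < x.1 0}
    (isOpen_lt (by fun_prop) (by fun_prop)) (isOpen_lt (by fun_prop) (by fun_prop))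
    (by
      intro x
      rcases lt_or_ge (x.1 0) (1 / 2) with h | h
      · exact Or.inl h
      · right
        change 1 / 8 < x.1 0
        linarith)
    (by
      intro a b γ hγ
      refine aux_square γ (γ.map ρ.continuous) (δ a) (δ b)
        (fun q => ⟨sh (γ q.1).1 (ln (γ q.1).1 q.2), hlX _ (γ q.1).2 (hγ q.1) q.2⟩) ?_ ?_ ?_ ?_ ?_
      · exact Continuous.subtype_mk
          (hlc.comp (by fun_prop : Continuous fun q : I × I => ((γ q.1).1, q.2))) _
      · intro t
        apply Subtype.ext
        change sh (γ t).1 (ln (γ t).1 ((0 : I) : ℝ)) = _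
        rw [show ((0 : I) : ℝ) = 0 from rfl, ln_zero, sh_self]
      · intro t
        apply Subtype.ext
        change sh (γ t).1 (ln (γ t).1 ((1 : I) : ℝ)) = (ρ (γ t)).1
        rw [show ((1 : I) : ℝ) = 1 from rfl, ln_one, hρ]
      · intro s
        apply Subtype.ext
        have := hγ 0
        rw [γ.source] at this
        simp only [γ.source]
        rw [hδU a this s]
      · intro s
        apply Subtype.ext
        have := hγ 1
        rw [γ.target] at this
        simp only [γ.target]
        rw [hδU b this s])
    (by
      intro a b γ hγ
      have hγ' : ∀ t, 1 / 8 ≤ (γ t).1 0 := fun t => le_of_lt (hγ t)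
      have ha : 1 / 8 ≤ a.1 0 := by simpa using hγ' 0
      have hb : 1 / 8 ≤ b.1 0 := by simpa using hγ' 1
      apply hVh
      · intro t
        rw [Path.trans_apply]
        split_ifs
        · exact hγ' _
        · exact hδV b hb _
      · intro t
        rw [Path.trans_apply]
        split_ifs
        · exact hδV a ha _
        · exact hρV _ (hγ' _))
  have hb4 : b 0 ≤ 1 / 4 := by linarith
  have hjb : j ⟨b, hb⟩ = ⟨b, hb'⟩ := rfl
  have hrb : r ⟨b, hb'⟩ = ⟨b, hb⟩ := by
    apply Subtype.ext
    change sh b (min (b 0) (1 / 4)) = b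
    rw [min_eq_left hb4, sh_self]
  have hρb : ρ ⟨b, hb⟩ = ⟨b, hb⟩ := hrb
  refine aux_iso j r _ _ hjb hrb ?_ ?_
  · intro γ
    refine ⟨(γ.map ρ.continuous).cast hρb.symm hρb.symm, ?_, fun t => rfl⟩
    have h := hmain _ _ γ
    have hd : δ ⟨b, hb⟩ = (Path.refl (⟨b, hb⟩ : ↥((A₁ ∪ A₂)ᶜ))).cast rfl hρb := by
      ext s : 2
      apply Subtype.ext
      rw [hδU _ (by change b 0 < 1 / 2; linarith) s]
      change sh b (ln b s) = b
      rw [ln_le _ _ hb4, sh_self]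
    rw [hd] at h
    have h2 := h.pathCast rfl hρb.symm
    have e1 : (γ.trans ((Path.refl (⟨b, hb⟩ : ↥((A₁ ∪ A₂)ᶜ))).cast rfl hρb)).cast rfl hρb.symm
      = γ.trans (Path.refl _) := by
      ext t : 2
      simp only [Path.cast_coe, Path.trans_apply]
    have e2 : (((Path.refl (⟨b, hb⟩ : ↥((A₁ ∪ A₂)ᶜ))).cast rfl hρb).trans
        (γ.map ρ.continuous)).cast rfl hρb.symm
      = (Path.refl _).trans ((γ.map ρ.continuous).cast hρb.symm hρb.symm) := by
      ext t : 2
      simp only [Path.cast_coe, Path.trans_apply]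
    rw [e1, e2] at h2
    exact (Path.Homotopic.trans_refl γ).symm.trans (h2.trans (Path.Homotopic.refl_trans _))
  · intro γ
    have hjr : j (r ⟨b, hb'⟩) = ⟨b, hb'⟩ := by rw [hrb, hjb]
    refine ⟨(γ.map (j.comp r).continuous).cast hjr.symm hjr.symm, ?_, fun t => rfl⟩
    have h := aux_square γ ((γ.map (j.comp r).continuous).cast hjr.symm hjr.symm)
      (Path.refl _) (Path.refl _)
      (fun q => ⟨sh (γ q.1).1 (ln (γ q.1).1 q.2), hlY _ (γ q.1).2 q.2⟩)
      (Continuous.subtype_mk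
          (hlc.comp (by fun_prop : Continuous fun q : I × I => ((γ q.1).1, q.2))) _)
      (by
        intro t
        apply Subtype.ext
        change sh (γ t).1 (ln (γ t).1 ((0 : I) : ℝ)) = _
        rw [show ((0 : I) : ℝ) = 0 from rfl, ln_zero, sh_self])
      (by
        intro t
        apply Subtype.ext
        change sh (γ t).1 (ln (γ t).1 ((1 : I) : ℝ)) = sh (γ t).1 (min ((γ t).1 0) (1 / 4))
        rw [show ((1 : I) : ℝ) = 1 from rfl, ln_one])
      (by
        intro s
        apply Subtype.ext
        simp only [γ.source, Path.refl_apply]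
        rw [ln_le _ _ hb4, sh_self])
      (by
        intro s
        apply Subtype.ext
        simp only [γ.target, Path.refl_apply]
        rw [ln_le _ _ hb4, sh_self])
    exact (Path.Homotopic.trans_refl γ).symm.trans (h.trans (Path.Homotopic.refl_trans _))

/-- Inversion in the unit sphere. -/
def iv (y : R3) : R3 := EuclideanGeometry.inversion 0 1 y

theorem iv_iv (y : R3) : iv (iv y) = y := EuclideanGeometry.inversion_inversion 0 one_ne_zero y

theorem iv_zero : iv 0 = 0 := EuclideanGeometry.inversion_self 0 1

theorem iv_def (y : R3) : iv y = (‖y‖ ^ 2)⁻¹ • y := by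
  simp [iv, EuclideanGeometry.inversion]

theorem norm_sq_R3 (y : R3) : ‖y‖ ^ 2 = y 0 ^ 2 + y 1 ^ 2 + y 2 ^ 2 := by
  rw [EuclideanSpace.real_norm_sq_eq, Fin.sum_univ_three]

/-- The inversion as a homeomorphism between complements. -/
def ivHomeo (C : Set R3) (h0 : (0 : R3) ∈ C) : ↥(Cᶜ) ≃ₜ ↥((iv ⁻¹' C)ᶜ) where
  toFun x := ⟨iv x.1, fun h => x.2 (by simpa [iv_iv] using h)⟩
  invFun y := ⟨iv y.1, y.2⟩
  left_inv x := Subtype.ext (iv_iv _)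
  right_inv x := Subtype.ext (iv_iv _)
  continuous_toFun := by
    refine Continuous.subtype_mk ?_ _
    refine Continuous.inversion continuous_const continuous_const continuous_subtype_val ?_
    intro a ha
    exact a.2 (ha ▸ h0)
  continuous_invFun := by
    refine Continuous.subtype_mk ?_ _
    refine Continuous.inversion continuous_const continuous_const continuous_subtype_val ?_
    intro a ha
    refine a.2 ?_
    rw [ha]
    change iv 0 ∈ C
    rwa [iv_zero]

theorem iv_ball (y : R3) (s : ℝ) (hs : s ^ 2 = 1) (hy : y ≠ 0)
    (h : iv y ∈ closedBall (pt s 0 0) 1) : 1 ≤ 2 * (s * y 0) := by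
  rw [mem_closedBall, dist_eq_norm] at h
  have h' : ‖iv y - pt s 0 0‖ ^ 2 ≤ 1 := by
    have := norm_nonneg (iv y - pt s 0 0)
    nlinarith
  rw [norm_sq_R3] at h'
  have hpos : 0 < ‖y‖ ^ 2 := by positivity
  have hn := norm_sq_R3 y
  set N := ‖y‖ ^ 2 with hN
  simp only [iv_def, pt, PiLp.sub_apply, PiLp.smul_apply, smul_eq_mul, ← hN] at h'
  simp at h'
  have e : (N⁻¹ * y 0 - s) ^ 2 + (N⁻¹ * y 1) ^ 2 + (N⁻¹ * y 2) ^ 2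
      = N⁻¹ * (N⁻¹ * N) - 2 * (s * y 0) * N⁻¹ + s ^ 2 := by rw [hn]; ring
  rw [e, inv_mul_cancel₀ hpos.ne', hs] at h'
  have hi : 0 < N⁻¹ := inv_pos.2 hpos
  by_contra hc
  push Not at hc
  nlinarith

/-- Wedge of Cantor sets at a tangency point of two balls: if the second Cantor set has
simply connected complement, then the fundamental group of the complement of the wedge is
isomorphic to the fundamental group of the complement of the first Cantor set. -/
theorem stmt_1 (C₁ C₂ : Set R3)
    (h₁ : IsCantorSubset C₁) (h₂ : IsCantorSubset C₂)
    (hB₁ : C₁ ⊆ closedBall (pt (-1) 0 0) 1)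
    (hB₂ : C₂ ⊆ closedBall (pt 1 0 0) 1)
    (hmeet : C₁ ∩ C₂ = {pt 0 0 0})
    (hsc : SimplyConnectedSpace ↥(C₂ᶜ)) :
    ∀ (hb : pt 0 0 5 ∈ (C₁ ∪ C₂)ᶜ) (hb' : pt 0 0 5 ∈ C₁ᶜ),
      Nonempty (FundamentalGroup ↥((C₁ ∪ C₂)ᶜ) ⟨pt 0 0 5, hb⟩ ≃*
        FundamentalGroup ↥(C₁ᶜ) ⟨pt 0 0 5, hb'⟩) := by
  intro hb hb'
  have h00 : pt 0 0 0 = 0 := by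
    ext i; fin_cases i <;> simp [pt]
  have h0 : (0 : R3) ∈ C₁ ∩ C₂ := by rw [hmeet, h00]; rfl
  have m1 : ∀ z ∈ iv ⁻¹' C₁, z 0 ≤ 0 := by
    intro z hz
    by_cases hz0 : z = 0
    · simp [hz0]
    · have := iv_ball z (-1) (by norm_num) hz0 (hB₁ hz)
      linarith
  have m2 : ∀ z ∈ iv ⁻¹' C₂, z ∈ iv ⁻¹' C₁ ∨ 1 / 2 ≤ z 0 := by
    intro z hz
    by_cases hz0 : z = 0
    · left
      rw [hz0, mem_preimage, iv_zero]
      exact h0.1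
    · right
      have := iv_ball z 1 (by norm_num) hz0 (hB₂ hz)
      linarith
  have hsc' : SimplyConnectedSpace ↥((iv ⁻¹' C₂)ᶜ) :=
    (ivHomeo C₂ h0.2).toHomotopyEquiv.simplyConnectedSpace_iff.1 hsc
  have hc1 : iv (pt 0 0 5) ∈ (iv ⁻¹' C₁ ∪ iv ⁻¹' C₂)ᶜ :=
    (ivHomeo (C₁ ∪ C₂) (Or.inl h0.1) ⟨_, hb⟩).2
  have hc2 : iv (pt 0 0 5) ∈ (iv ⁻¹' C₁)ᶜ := (ivHomeo C₁ h0.1 ⟨_, hb'⟩).2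
  obtain ⟨e1⟩ := aux_homeo (ivHomeo (C₁ ∪ C₂) (Or.inl h0.1)) ⟨_, hb⟩ ⟨iv (pt 0 0 5), hc1⟩ rfl
  obtain ⟨e2⟩ := aux_homeo (ivHomeo C₁ h0.1) ⟨_, hb'⟩ ⟨iv (pt 0 0 5), hc2⟩ rfl
  obtain ⟨e3⟩ := aux_main (iv ⁻¹' C₁) (iv ⁻¹' C₂) m1 m2 hsc' (iv (pt 0 0 5))
    (by rw [iv_def]; simp [pt]) hc1 hc2
  exact ⟨(e1.trans e3).trans e2.symm⟩
end
end

section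
/- Let C₁ and C₂ be Cantor sets in ℝ³ contained in disjoint closed balls B₁ and B₂ respectively, and let C = C₁ ∪ C₂. Then the fundamental group of ℝ³ \ C is isomorphic to the free product of the fundamental group of ℝ³ \ C₁ and the fundamental group of ℝ³ \ C₂ (basepoints taken in the respective complements, which are path-connected). -/
open Metric Set

noncomputable section

namespace SvK

open unitInterval Topology

set_option linter.unusedSectionVars false

variable {E : Type*} [NormedAddCommGroup E] [NormedSpace ℝ E] {G : Type*} [Group G]

/-- Path homotopy inside a set. -/
def HIn (S : Set E) {a b : E} (p q : Path a b) : Prop :=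
  ∃ H : p.Homotopy q, ∀ z, H z ∈ S

/-- Corestriction of a path to a set containing it. -/
def res (S : Set E) {a b : E} (p : Path a b) (hp : ∀ t, p t ∈ S) (ha : a ∈ S) (hb : b ∈ S) :
    Path (⟨a, ha⟩ : S) ⟨b, hb⟩ where
  toFun t := ⟨p t, hp t⟩
  continuous_toFun := by fun_prop
  source' := by simp
  target' := by simp

theorem HIn.of_homotopic {S : Set E} {a b : S} {p q : Path a b} (h : p.Homotopic q) :
    HIn S (p.map continuous_subtype_val) (q.map continuous_subtype_val) := by
  obtain ⟨H⟩ := h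
  exact ⟨H.map ⟨Subtype.val, continuous_subtype_val⟩, fun z => (H z).2⟩

theorem HIn.homotopic {S : Set E} {a b : E} {p q : Path a b} (h : HIn S p q)
    (hp : ∀ t, p t ∈ S) (hq : ∀ t, q t ∈ S) (ha : a ∈ S) (hb : b ∈ S) :
    (res S p hp ha hb).Homotopic (res S q hq ha hb) := by
  obtain ⟨H, hH⟩ := h
  refine ⟨⟨⟨⟨fun z => ⟨H z, hH z⟩, by fun_prop⟩, ?_, ?_⟩, ?_⟩⟩
  · intro t; apply Subtype.ext; simp [res]
  · intro t; apply Subtype.ext; simp [res]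
  · intro t x hx
    apply Subtype.ext
    have := H.prop' t x hx
    simpa [res] using! this

theorem HIn.mono {S T : Set E} (h : S ⊆ T) {a b : E} {p q : Path a b} (H : HIn S p q) :
    HIn T p q := by
  obtain ⟨H, hH⟩ := H
  exact ⟨H, fun z => h (hH z)⟩

theorem HIn.left {S : Set E} {a b : E} {p q : Path a b} (h : HIn S p q) (t : I) : p t ∈ S := by
  obtain ⟨H, hH⟩ := h
  have := hH (0, t)
  simpa using this

theorem HIn.right {S : Set E} {a b : E} {p q : Path a b} (h : HIn S p q) (t : I) : q t ∈ S := by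
  obtain ⟨H, hH⟩ := h
  have := hH (1, t)
  simpa using this

theorem HIn.of_convex {B : Set E} (hB : Convex ℝ B) {a b : E} (p q : Path a b)
    (hp : ∀ t, p t ∈ B) (hq : ∀ t, q t ∈ B) : HIn B p q := by
  refine ⟨⟨⟨⟨fun z => AffineMap.lineMap (p z.2) (q z.2) (z.1 : ℝ), ?_⟩, ?_, ?_⟩, ?_⟩, ?_⟩
  · simp only [AffineMap.lineMap_apply_module]
    fun_prop
  · intro t; simp
  · intro t; simp
  · rintro t x (rfl | rfl) <;> simp
  · intro z
    exact hB.lineMap_mem (hp z.2) (hq z.2) z.1.2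

theorem segment_mem {B : Set E} (hB : Convex ℝ B) {a b : E} (ha : a ∈ B) (hb : b ∈ B) (t : I) :
    Path.segment a b t ∈ B := by
  have : Path.segment a b t ∈ range (Path.segment a b) := ⟨t, rfl⟩
  rw [Path.range_segment] at this
  exact hB.segment_subset ha hb this

/-- A `G`-valued functional on paths, multiplicative and homotopy invariant for paths in `S`. -/
structure IsFun (S : Set E) (F : ∀ ⦃a b : E⦄, Path a b → G) : Prop where
  trans : ∀ {a b c : E} (p : Path a b) (q : Path b c), (∀ t, p t ∈ S) → (∀ t, q t ∈ S) →
    F (p.trans q) = F q * F p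
  homot : ∀ {a b : E} {p q : Path a b}, HIn S p q → F p = F q

variable {S : Set E} {F F' : ∀ ⦃a b : E⦄, Path a b → G}

theorem fun_cast (F : ∀ ⦃a b : E⦄, Path a b → G) {a b a' b' : E} (p : Path a b)
    (ha : a' = a) (hb : b' = b) : F (p.cast ha hb) = F p := by
  subst ha; subst hb; rfl

theorem trans_mem {a b c : E} {p : Path a b} {q : Path b c} (hp : ∀ t, p t ∈ S)
    (hq : ∀ t, q t ∈ S) (t : I) : p.trans q t ∈ S := by
  rw [Path.trans_apply]
  split_ifs
  · exact hp _
  · exact hq _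

theorem subpath_mem {a b : E} {p : Path a b} {s t : I} (hp : ∀ u ∈ uIcc s t, p u ∈ S)
    (u : I) : p.subpath s t u ∈ S := by
  have : p.subpath s t u ∈ range (p.subpath s t) := ⟨u, rfl⟩
  rw [Path.range_subpath] at this
  obtain ⟨v, hv, h⟩ := this
  rw [← h]; exact hp v hv

theorem IsFun.refl (hF : IsFun S F) {a : E} (ha : a ∈ S) : F (Path.refl a) = 1 := by
  have := hF.trans (Path.refl a) (Path.refl a) (fun _ => ha) (fun _ => ha)
  rw [Path.refl_trans_refl] at this
  simpa using this

theorem IsFun.subpath (hF : IsFun S F) {a b : E} (p : Path a b) (hp : ∀ t, p t ∈ S) (s t u : I) :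
    F (p.subpath s u) = F (p.subpath t u) * F (p.subpath s t) := by
  rw [← hF.trans _ _ (fun v => subpath_mem (fun _ _ => hp _) v)
    (fun v => subpath_mem (fun _ _ => hp _) v)]
  have ha : a ∈ S := by simpa using hp 0
  have hb : b ∈ S := by simpa using hp 1
  have H : HIn S _ _ := HIn.of_homotopic
    ⟨Path.Homotopy.subpathTransSubpath (res S p hp ha hb) s t u⟩
  symm
  refine hF.homot ?_
  convert! H using 1
  ext v
  simp [Path.trans_apply, Path.subpath, res]

theorem IsFun.convex (hF : IsFun S F) {B : Set E} (hB : Convex ℝ B) (hBS : B ⊆ S)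
    {a b : E} (p q : Path a b) (hp : ∀ t, p t ∈ B) (hq : ∀ t, q t ∈ B) : F p = F q :=
  hF.homot ((HIn.of_convex hB p q hp hq).mono hBS)

theorem IsFun.triangle (hF : IsFun S F) {B : Set E} (hB : Convex ℝ B) (hBS : B ⊆ S)
    {a b c : E} (ha : a ∈ B) (hb : b ∈ B) (hc : c ∈ B) :
    F (Path.segment a c) = F (Path.segment b c) * F (Path.segment a b) := by
  rw [← hF.trans _ _ (fun t => hBS (segment_mem hB ha hb t))
    (fun t => hBS (segment_mem hB hb hc t))]
  exact hF.convex hB hBS _ _ (segment_mem hB ha hc)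
    (trans_mem (segment_mem hB ha hb) (segment_mem hB hb hc))

/-- Near a parameter `t₀`, subpaths stay in a given neighbourhood. -/
theorem eventually_subpath {a b : E} (p : Path a b) (t₀ : I) {N : Set E} (hN : N ∈ 𝓝 (p t₀)) :
    ∀ᶠ t in 𝓝 t₀, ∀ u ∈ uIcc t₀ t, p u ∈ N := by
  have h : ∀ᶠ u in 𝓝 t₀, p u ∈ N := p.continuous.continuousAt hN
  obtain ⟨ε, hε, h⟩ := Metric.eventually_nhds_iff_ball.1 h
  refine Metric.eventually_nhds_iff_ball.2 ⟨ε, hε, fun t ht u hu => h u ?_⟩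
  rw [mem_ball, Subtype.dist_eq, Real.dist_eq] at ht ⊢
  have hu' : (u : ℝ) ∈ uIcc (t₀ : ℝ) (t : ℝ) := by
    rcases le_total t₀ t with h' | h'
    · rw [uIcc_of_le h'] at hu
      rw [uIcc_of_le (by exact_mod_cast h')]
      exact hu
    · rw [uIcc_of_ge h'] at hu
      rw [uIcc_of_ge (by exact_mod_cast h')]
      exact hu
  exact (abs_sub_left_of_mem_uIcc hu').trans_lt ht

/-- Uniqueness: functionals agreeing on small paths agree. -/
theorem IsFun.ext_small {ι : Type*} {O : ι → Set E} (hO : ∀ i, IsOpen (O i))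
    (hS : S = ⋃ i, O i) (hF : IsFun S F) (hF' : IsFun S F')
    (h : ∀ i, ∀ {a b : E} (p : Path a b), (∀ t, p t ∈ O i) → F p = F' p)
    {a b : E} (p : Path a b) (hp : ∀ t, p t ∈ S) : F p = F' p := by
  have hlc : IsLocallyConstant (fun t : I => (F' (p.subpath 0 t))⁻¹ * F (p.subpath 0 t)) := by
    rw [IsLocallyConstant.iff_eventually_eq]
    intro t₀
    have h0 : p t₀ ∈ ⋃ i, O i := hS ▸ hp t₀
    obtain ⟨i, hi⟩ := mem_iUnion.1 h0
    filter_upwards [eventually_subpath p t₀ ((hO i).mem_nhds hi)] with t ht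
    rw [hF.subpath p hp 0 t₀ t, hF'.subpath p hp 0 t₀ t, h i _ (subpath_mem ht)]
    group
  have h01 := hlc.apply_eq_of_isPreconnected isPreconnected_univ (mem_univ (1 : I)) (mem_univ 0)
  have ha : p 0 ∈ S := hp 0
  simp only [Path.subpath_self, hF.refl ha, hF'.refl ha, Path.subpath_zero_one] at h01
  rw [fun_cast F, fun_cast F'] at h01
  have h2 : F' p = F p := by simpa [inv_mul_eq_one] using h01
  exact h2.symm

section extension

variable {ι : Type*} {O : ι → Set E}

theorem exists_radius (hO : ∀ i, IsOpen (O i)) (hS : S = ⋃ i, O i) (x : S) :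
    ∃ r > 0, ∃ i, ball (x : E) r ⊆ O i := by
  have h0 : (x : E) ∈ ⋃ i, O i := hS ▸ x.2
  obtain ⟨i, hi⟩ := mem_iUnion.1 h0
  obtain ⟨r, hr, h⟩ := Metric.isOpen_iff.1 (hO i) x hi
  exact ⟨r, hr, i, h⟩

/-- The bundle core describing the covering associated with a functional. -/
def core [TopologicalSpace G] [DiscreteTopology G] (r : S → ℝ) (hr : ∀ x, 0 < r x)
    (hF : ∀ i, IsFun (O i) F) (hi : ∀ x : S, ∃ i, ball (x : E) (r x) ⊆ O i) :
    FiberBundleCore S S G where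
  baseSet x := {b | (b : E) ∈ ball (x : E) (r x)}
  isOpen_baseSet x := isOpen_ball.preimage continuous_subtype_val
  indexAt := id
  mem_baseSet_at x := mem_ball_self (hr x)
  coordChange x y b g := (F (Path.segment (y : E) b))⁻¹ * F (Path.segment (x : E) b) * g
  coordChange_self x b _ g := by simp
  coordChange_comp x y z b _ g := by group
  continuousOn_coordChange x y := by
    rcases Set.eq_empty_or_nonempty ({b : S | (b : E) ∈ ball (x : E) (r x)} ∩
      {b : S | (b : E) ∈ ball (y : E) (r y)}) with h | ⟨b₀, hb₀⟩
    · rw [h]; simp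
    · have hc : Continuous (fun p : S × G => (F (Path.segment (y : E) b₀))⁻¹ *
        F (Path.segment (x : E) b₀) * p.2) :=
        (continuous_of_discreteTopology (f := fun g : G => (F (Path.segment (y : E) b₀))⁻¹ *
        F (Path.segment (x : E) b₀) * g)).comp continuous_snd
      refine hc.continuousOn.congr ?_
      rintro ⟨b, g⟩ ⟨hb, -⟩
      obtain ⟨i, hix⟩ := hi x
      obtain ⟨j, hjy⟩ := hi y
      dsimp only
      rw [(hF i).triangle (convex_ball _ _) hix (mem_ball_self (hr x)) hb₀.1 hb.1,
        (hF j).triangle (convex_ball _ _) hjy (mem_ball_self (hr y)) hb₀.2 hb.2]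
      group

/-- Extension: a functional on small paths extends to all paths. -/
theorem exists_extension (hO : ∀ i, IsOpen (O i)) (hS : S = ⋃ i, O i)
    (hF : ∀ i, IsFun (O i) F) :
    ∃ F' : ∀ ⦃a b : E⦄, Path a b → G, IsFun S F' ∧
      ∀ i, ∀ {a b : E} (p : Path a b), (∀ t, p t ∈ O i) → F' p = F p := by
  classical
  let _ : TopologicalSpace G := ⊥
  have : DiscreteTopology G := ⟨rfl⟩
  choose r hr hi using exists_radius hO hS
  let Z := core (F := F) r hr hF hi
  have cov : IsCoveringMap Z.proj := FiberBundle.isCoveringMap (F := G) (E := Z.Fiber)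
  have cont (γ : I → S) (hγ : Continuous γ) (k : I → G) :
      Continuous (fun t => (⟨γ t, k t⟩ : Z.TotalSpace)) ↔
      ∀ t₀, ∀ᶠ t in 𝓝 t₀, k t = F (Path.segment (γ t₀ : E) (γ t)) * k t₀ := by
    rw [continuous_iff_continuousAt]
    refine forall_congr' fun t₀ => ?_
    have A : γ ⁻¹' Z.baseSet (γ t₀) ∈ 𝓝 t₀ :=
      hγ.continuousAt.preimage_mem_nhds
        ((Z.isOpen_baseSet (γ t₀)).mem_nhds (Z.mem_baseSet_at (γ t₀)))
    have hcc : ∀ t, Z.localTrivAt (γ t₀) ⟨γ t, k t⟩ =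
        (γ t, (F (Path.segment (γ t₀ : E) (γ t)))⁻¹ * k t) := by
      intro t
      have h1 : F (Path.segment (γ t : E) (γ t)) = 1 := by
        obtain ⟨i, h⟩ := hi (γ t)
        rw [Path.segment_same]
        exact (hF i).refl (h (mem_ball_self (hr (γ t))))
      have h2 : Z.localTrivAt (γ t₀) ⟨γ t, k t⟩ = (γ t, (F (Path.segment (γ t₀ : E) (γ t)))⁻¹ *
        F (Path.segment (γ t : E) (γ t)) * k t) := rfl
      rw [h2, h1, mul_one]
    have h3 : F (Path.segment (γ t₀ : E) (γ t₀)) = 1 := by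
      obtain ⟨i, h⟩ := hi (γ t₀)
      rw [Path.segment_same]
      exact (hF i).refl (h (mem_ball_self (hr (γ t₀))))
    have h4 : ((Z.localTrivAt (γ t₀)).toOpenPartialHomeomorph ∘
        fun t => (⟨γ t, k t⟩ : Z.TotalSpace)) =
        fun t => (γ t, (F (Path.segment (γ t₀ : E) (γ t)))⁻¹ * k t) := by
      funext t
      exact hcc t
    rw [(Z.localTrivAt (γ t₀)).toOpenPartialHomeomorph.continuousAt_iff_continuousAt_comp_left A,
      h4]
    constructor
    · intro h
      have h5 := (continuousAt_snd.comp h)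
      have h6 : ∀ᶠ t in 𝓝 t₀, (F (Path.segment (γ t₀ : E) (γ t)))⁻¹ * k t = k t₀ := by
        have := h5.preimage_mem_nhds ((isOpen_discrete {k t₀}).mem_nhds (by
          show (F (Path.segment (γ t₀ : E) (γ t₀)))⁻¹ * k t₀ = k t₀
          rw [h3]; simp))
        exact this
      filter_upwards [h6] with t ht
      rw [← ht]; group
    · intro h
      refine hγ.continuousAt.prodMk ?_
      refine (continuousAt_const (y := k t₀)).congr ?_
      filter_upwards [h] with t ht
      rw [ht]; group
  let sn : Z.TotalSpace → G := fun e => e.snd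
  have mk2 (b b' : S) (g g' : G) (hb : b = b') (hg : g = g') :
      (⟨b, g⟩ : Z.TotalSpace) = ⟨b', g'⟩ := by
    subst hb; subst hg; rfl
  have mkeq (b : S) (e : Z.TotalSpace) (h : Z.proj e = b) :
      (⟨b, sn e⟩ : Z.TotalSpace) = e := by
    subst h; rfl
  let Dev (g : G) {a b : E} (p : Path a b) (k : I → G) : Prop :=
    k 0 = g ∧ ∀ t₀, ∀ᶠ t in 𝓝 t₀, k t = F (Path.segment (p t₀) (p t)) * k t₀
  have Dcont (g : G) {a b : E} (p : Path a b) (k : I → G) (hp : ∀ t, p t ∈ S) (h : Dev g p k) :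
      Continuous (fun t => (⟨⟨p t, hp t⟩, k t⟩ : Z.TotalSpace)) :=
    (cont (fun t => ⟨p t, hp t⟩) (by fun_prop) k).2 h.2
  have ex {a b : E} (p : Path a b) (hp : ∀ t, p t ∈ S) : ∃ k, Dev 1 p k := by
    have ha : a ∈ S := by simpa using hp 0
    have hb : b ∈ S := by simpa using hp 1
    let γ := res S p hp ha hb
    let Γ := cov.liftPath γ ⟨⟨a, ha⟩, (1 : G)⟩ (by simp)
    have hΓ : ∀ t, Z.proj (Γ t) = γ t := fun t => congr_fun (cov.liftPath_lifts γ _ _) t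
    refine ⟨fun t => sn (Γ t), ?_, ?_⟩
    · have : Γ 0 = ⟨⟨a, ha⟩, (1 : G)⟩ := cov.liftPath_zero _ _ _
      show sn (Γ 0) = 1
      rw [this]
    · refine (cont γ γ.continuous _).1 ?_
      convert Γ.continuous using 2 with t
      exact mkeq _ _ (hΓ t)
  have uniq (g : G) {a b : E} (p q : Path a b) (k k' : I → G) (h : HIn S p q) (hk : Dev g p k)
      (hk' : Dev g q k') : k 1 = k' 1 := by
    have ha : a ∈ S := by simpa using h.left 0
    have hb : b ∈ S := by simpa using h.left 1
    have key := cov.liftPath_apply_one_eq_of_homotopicRel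
      (h.homotopic h.left h.right ha hb) ⟨⟨a, ha⟩, g⟩ (by simp) (by simp)
    have e1 := (cov.eq_liftPath_iff (γ := (res S p h.left ha hb : C(I, S)))
      (e := ⟨⟨a, ha⟩, g⟩) (by simp)).2
      ⟨Dcont g p k h.left hk, rfl, mk2 _ _ _ _ (Subtype.ext p.source) hk.1⟩
    have e2 := (cov.eq_liftPath_iff (γ := (res S q h.right ha hb : C(I, S)))
      (e := ⟨⟨a, ha⟩, g⟩) (by simp)).2
      ⟨Dcont g q k' h.right hk', rfl, mk2 _ _ _ _ (Subtype.ext q.source) hk'.1⟩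
    exact congrArg sn ((congr_fun e1 1).trans (key.trans (congr_fun e2 1).symm))
  have hrefl {a b : E} (p : Path a b) (hp : ∀ t, p t ∈ S) : HIn S p p :=
    ⟨Path.Homotopy.refl p, fun z => hp z.2⟩
  let F' : ∀ ⦃a b : E⦄, Path a b → G := fun a b p =>
    if h : ∃ k, Dev 1 p k then h.choose 1 else 1
  have F'eq {a b : E} (p : Path a b) (hp : ∀ t, p t ∈ S) (k : I → G) (hk : Dev 1 p k) :
      F' p = k 1 := by
    have h : ∃ k, Dev 1 p k := ⟨k, hk⟩
    simp only [F', dif_pos h]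
    exact uniq 1 p p _ _ (hrefl p hp) h.choose_spec hk
  refine ⟨F', ⟨?_, ?_⟩, ?_⟩
  · intro a b c p q hp hq
    obtain ⟨k, hk⟩ := ex p hp
    obtain ⟨k', hk'⟩ := ex q hq
    have hpq := trans_mem hp hq
    rw [F'eq p hp k hk, F'eq q hq k' hk']
    have hk2 : Dev (k 1) q (fun t => k' t * k 1) := by
      refine ⟨by simp [hk'.1], fun t₀ => ?_⟩
      filter_upwards [hk'.2 t₀] with t ht
      rw [ht, mul_assoc]
    let Γ₁ : Path (⟨⟨p 0, hp 0⟩, k 0⟩ : Z.TotalSpace) ⟨⟨p 1, hp 1⟩, k 1⟩ :=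
      ⟨⟨_, Dcont 1 p k hp hk⟩, rfl, rfl⟩
    let Γ₂ : Path (⟨⟨p 1, hp 1⟩, k 1⟩ : Z.TotalSpace) ⟨⟨q 1, hq 1⟩, k' 1 * k 1⟩ :=
      ⟨⟨_, Dcont _ q (fun t => k' t * k 1) hq hk2⟩, mk2 _ _ _ _ (Subtype.ext (q.source.trans p.target.symm)) hk2.1, rfl⟩
    have hpr : ∀ t, Z.proj (Γ₁.trans Γ₂ t) = ⟨p.trans q t, hpq t⟩ := by
      intro t
      apply Subtype.ext
      simp only [Path.trans_apply]
      split_ifs <;> rfl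
    have hd : Dev 1 (p.trans q) (fun t => sn (Γ₁.trans Γ₂ t)) := by
      refine ⟨?_, ?_⟩
      · have : Γ₁.trans Γ₂ 0 = ⟨⟨p 0, hp 0⟩, k 0⟩ := (Γ₁.trans Γ₂).source
        show sn (Γ₁.trans Γ₂ 0) = 1
        rw [this]; exact hk.1
      · refine (cont (fun t => ⟨p.trans q t, hpq t⟩) (by fun_prop) _).1 ?_
        convert (Γ₁.trans Γ₂).continuous using 2 with t
        exact mkeq _ _ (hpr t)
    rw [F'eq (p.trans q) hpq (fun t => sn (Γ₁.trans Γ₂ t)) hd]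
    have : Γ₁.trans Γ₂ 1 = ⟨⟨q 1, hq 1⟩, k' 1 * k 1⟩ := (Γ₁.trans Γ₂).target
    show sn (Γ₁.trans Γ₂ 1) = _
    rw [this]
  · intro a b p q h
    obtain ⟨k, hk⟩ := ex p h.left
    obtain ⟨k', hk'⟩ := ex q h.right
    rw [F'eq p h.left k hk, F'eq q h.right k' hk']
    exact uniq 1 p q k k' h hk hk'
  · intro i a b p hp
    have hpS : ∀ t, p t ∈ S := fun t => hS ▸ mem_iUnion.2 ⟨i, hp t⟩
    have hd : Dev 1 p (fun t => F (p.subpath 0 t)) := by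
      refine ⟨?_, fun t₀ => ?_⟩
      · simp only [Path.subpath_self]
        exact (hF i).refl (hp 0)
      · obtain ⟨ρ, hρ, hb⟩ := Metric.isOpen_iff.1 (hO i) _ (hp t₀)
        filter_upwards [eventually_subpath p t₀ (ball_mem_nhds _ hρ)] with t ht
        rw [(hF i).subpath p hp 0 t₀ t]
        congr 1
        exact (hF i).convex (convex_ball _ _) hb _ _ (subpath_mem ht)
          (segment_mem (convex_ball _ _) (mem_ball_self hρ) (ht t right_mem_uIcc))
    rw [F'eq p hpS (fun t => F (p.subpath 0 t)) hd]
    simp only [Path.subpath_zero_one]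
    exact fun_cast F _ _ _

end extension

/-- Two disjoint closed sets not separating two points have a union not separating them. -/
theorem joinedIn_union {A B : Set E} (hA : IsClosed A) (hB : IsClosed B) (hAB : Disjoint A B)
    {x y : E} (hxA : JoinedIn Aᶜ x y) (hxB : JoinedIn Bᶜ x y) : JoinedIn (A ∪ B)ᶜ x y := by
  classical
  by_contra hcon
  obtain ⟨p, hp⟩ := hxA
  obtain ⟨q, hq⟩ := hxB
  have hx : x ∈ (A ∪ B)ᶜ := by
    have h1 := hp 0
    have h2 := hq 0
    simp only [Path.source, mem_compl_iff] at h1 h2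
    simp [h1, h2]
  let f : E → ℤ := fun z => if JoinedIn (A ∪ B)ᶜ x z then 1 else 0
  let F : ∀ ⦃a b : E⦄, Path a b → Multiplicative ℤ := fun a b p =>
    if ∀ t, p t ∈ Aᶜ then 1 else Multiplicative.ofAdd (f b - f a)
  have hFB {a b : E} (p : Path a b) (hp : ∀ t, p t ∈ Bᶜ) :
      F p = Multiplicative.ofAdd (f b - f a) := by
    simp only [F]
    split_ifs with h
    · have hab : JoinedIn (A ∪ B)ᶜ a b := ⟨p, fun t => by
        have h1 := h t
        have h2 := hp t
        simp only [mem_compl_iff] at h1 h2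
        simp [h1, h2]⟩
      have : f b = f a := by
        simp only [f]
        congr 1
        exact propext ⟨fun h => h.trans hab.symm, fun h => h.trans hab⟩
      simp [this]
    · rfl
  let O : Bool → Set E := fun i => if i then Aᶜ else Bᶜ
  have hO : ∀ i, IsOpen (O i) := by
    rintro (_ | _)
    · exact hB.isOpen_compl
    · exact hA.isOpen_compl
  have hS : (univ : Set E) = ⋃ i, O i := by
    symm
    rw [eq_univ_iff_forall]
    intro z
    by_cases hz : z ∈ A
    · exact mem_iUnion.2 ⟨false, fun hz' => hAB.le_bot ⟨hz, hz'⟩⟩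
    · exact mem_iUnion.2 ⟨true, hz⟩
  have hF : ∀ i, IsFun (O i) F := by
    rintro (_ | _)
    · refine ⟨fun p q hp hq => ?_, fun {a b p q} h => ?_⟩
      · rw [hFB p hp, hFB q hq, hFB _ (trans_mem hp hq), ← ofAdd_add]
        congr 1; ring
      · rw [hFB p h.left, hFB q h.right]
    · refine ⟨fun p q hp hq => ?_, fun {a b p q} h => ?_⟩
      · have h1 : ∀ t, p t ∈ Aᶜ := hp
        have h2 : ∀ t, q t ∈ Aᶜ := hq
        have h3 : ∀ t, p.trans q t ∈ Aᶜ := trans_mem hp hq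
        simp only [F, if_pos h1, if_pos h2, if_pos h3, mul_one]
      · have h1 : ∀ t, p t ∈ Aᶜ := h.left
        have h2 : ∀ t, q t ∈ Aᶜ := h.right
        simp only [F, if_pos h1, if_pos h2]
  obtain ⟨F', hF', hag⟩ := exists_extension hO hS hF
  have h1 : F' p = F' q :=
    hF'.convex convex_univ subset_rfl p q (fun _ => mem_univ _) (fun _ => mem_univ _)
  rw [hag true p hp, hag false q hq, hFB q hq] at h1
  simp only [F, if_pos hp] at h1
  have hxx : JoinedIn (A ∪ B)ᶜ x x := JoinedIn.refl hx
  have h2 : f y - f x = 0 := Multiplicative.ofAdd.injective h1.symm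
  simp only [f, if_pos hxx, if_neg hcon] at h2
  norm_num at h2

/-- The complement of an open ball is path connected: any two points are joined. -/
theorem joinedIn_compl_ball (hE : 1 < Module.rank ℝ E) (c : E) {r : ℝ} (hr : 0 < r) {x y : E}
    (hx : x ∉ ball c r) (hy : y ∉ ball c r) : JoinedIn (ball c r)ᶜ x y := by
  have hs := isPathConnected_sphere hE c hr.le
  have key : ∀ z, z ∉ ball c r → ∃ w ∈ sphere c r, JoinedIn (ball c r)ᶜ z w := by
    intro z hz
    have hd : r ≤ ‖z - c‖ := by
      rw [mem_ball, not_lt, dist_eq_norm] at hz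
      exact hz
    have hpos : 0 < ‖z - c‖ := hr.trans_le hd
    refine ⟨c + (r / ‖z - c‖) • (z - c), ?_, ?_⟩
    · rw [mem_sphere, dist_eq_norm, add_sub_cancel_left, norm_smul, norm_div, norm_norm,
        Real.norm_of_nonneg hr.le]
      field_simp
    · refine JoinedIn.of_segment_subset ?_
      rintro w ⟨a, b, ha, hb, hab, rfl⟩
      have e : a • z + b • (c + (r / ‖z - c‖) • (z - c)) - c =
          (a + b * (r / ‖z - c‖)) • (z - c) := by
        have : a = 1 - b := by linarith
        subst this
        module
      rw [mem_compl_iff, mem_ball, dist_eq_norm, e, norm_smul, Real.norm_of_nonneg (by positivity),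
        not_lt, add_mul, mul_assoc, div_mul_cancel₀ _ hpos.ne']
      nlinarith
  obtain ⟨x', hx', hxx⟩ := key x hx
  obtain ⟨y', hy', hyy⟩ := key y hy
  have := (hs.joinedIn x' hx' y' hy').mono (fun z hz => by
    rw [mem_compl_iff, mem_ball, mem_sphere.1 hz]; simp : sphere c r ⊆ (ball c r)ᶜ)
  exact hxx.trans (this.trans hyy.symm)

/-- Compact totally disconnected sets do not separate. -/
theorem joinedIn_compl (hE : 1 < Module.rank ℝ E) {K : Set E} (hK : IsCompact K)
    (hKd : IsTotallyDisconnected K) {x y : E} (hx : x ∉ K) (hy : y ∉ K) : JoinedIn Kᶜ x y := by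
  have : CompactSpace K := isCompact_iff_compactSpace.1 hK
  have : TotallyDisconnectedSpace K := totallyDisconnectedSpace_subtype_iff.2 hKd
  have hcl (A : Set K) (hA : IsClopen A) : IsClosed ((↑) '' A : Set E) :=
    (hA.1.isCompact.image continuous_subtype_val).isClosed
  have hind : ∃ A : Set K, univ ⊆ A ∧ IsClopen A ∧ JoinedIn ((↑) '' A : Set E)ᶜ x y := by
    refine isCompact_univ.induction_on (p := fun s => ∃ A : Set K, s ⊆ A ∧ IsClopen A ∧
      JoinedIn ((↑) '' A : Set E)ᶜ x y) ?_ ?_ ?_ ?_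
    · refine ⟨∅, subset_rfl, isClopen_empty, ?_⟩
      simp only [image_empty, compl_empty]
      exact JoinedIn.of_segment_subset (subset_univ _)
    · rintro s t hst ⟨A, hA, h⟩
      exact ⟨A, hst.trans hA, h⟩
    · rintro s t ⟨A, hA, hA1, hA2⟩ ⟨B, hB, hB1, hB2⟩
      refine ⟨A ∪ B, union_subset_union hA hB, hA1.union hB1, ?_⟩
      have h1 : JoinedIn ((↑) '' (B \ A) : Set E)ᶜ x y :=
        hB2.mono (compl_subset_compl.2 (image_mono sdiff_subset))
      have h2 := joinedIn_union (hcl A hA1) (hcl _ (hB1.diff hA1))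
        ((disjoint_image_iff Subtype.val_injective).2 disjoint_sdiff_right) hA2 h1
      rwa [← image_union, union_sdiff_self] at h2
    · intro k _
      obtain ⟨r, hr, hrx⟩ : ∃ r > 0, x ∉ ball (k : E) r ∧ y ∉ ball (k : E) r := by
        have h1 : 0 < dist x k := dist_pos.2 fun h => hx (h ▸ k.2)
        have h2 : 0 < dist y k := dist_pos.2 fun h => hy (h ▸ k.2)
        refine ⟨min (dist x k) (dist y k), lt_min h1 h2, ?_, ?_⟩ <;> simp
      obtain ⟨V, hV, hkV, hVU⟩ := compact_exists_isClopen_in_isOpen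
        (isOpen_ball.preimage continuous_subtype_val : IsOpen {z : K | (z : E) ∈ ball (k : E) r})
        (mem_ball_self hr)
      refine ⟨V, ?_, V, subset_rfl, hV, ?_⟩
      · exact mem_nhdsWithin_of_mem_nhds (hV.2.mem_nhds hkV)
      · refine (joinedIn_compl_ball hE _ hr hrx.1 hrx.2).mono (compl_subset_compl.2 ?_)
        rintro _ ⟨z, hz, rfl⟩
        exact hVU hz
  obtain ⟨A, hA, -, h⟩ := hind
  rw [univ_subset_iff.1 hA] at h
  simpa using h


section vanKampen

open Monoid.Coprod

variable {x₀ : E}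

open Classical in
/-- The class of a loop in the fundamental group of `S` (junk value `1` if it leaves `S`). -/
def cl (S : Set E) (h : x₀ ∈ S) (p : Path x₀ x₀) : FundamentalGroup S ⟨x₀, h⟩ :=
  if hp : ∀ t, p t ∈ S then FundamentalGroup.fromPath (Path.Homotopic.Quotient.mk (res S p hp h h))
    else 1

theorem cl_eq {h : x₀ ∈ S} {p : Path x₀ x₀} (hp : ∀ t, p t ∈ S) : cl S h p =
    FundamentalGroup.fromPath (Path.Homotopic.Quotient.mk (res S p hp h h)) := dif_pos hp

theorem cl_homot {h : x₀ ∈ S} {p q : Path x₀ x₀} (H : HIn S p q) : cl S h p = cl S h q := by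
  rw [cl_eq H.left, cl_eq H.right]
  exact Quotient.sound (H.homotopic H.left H.right h h)

theorem cl_trans {h : x₀ ∈ S} {p q : Path x₀ x₀} (hp : ∀ t, p t ∈ S) (hq : ∀ t, q t ∈ S) :
    cl S h (p.trans q) = cl S h q * cl S h p := by
  rw [cl_eq hp, cl_eq hq, cl_eq (trans_mem hp hq), FundamentalGroup.mul_def]
  have : res S (p.trans q) (trans_mem hp hq) h h = (res S p hp h h).trans (res S q hq h h) := by
    ext t
    simp only [res, Path.trans_apply, Path.coe_mk_mk]
    split_ifs <;> rfl
  rw [this]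
  rfl

theorem cl_surj {h : x₀ ∈ S} (g : FundamentalGroup S ⟨x₀, h⟩) :
    ∃ p : Path x₀ x₀, (∀ t, p t ∈ S) ∧ cl S h p = g := by
  obtain ⟨p, hp⟩ := Quotient.exists_rep (FundamentalGroup.toPath g)
  refine ⟨p.map continuous_subtype_val, fun t => (p t).2, ?_⟩
  rw [cl_eq (fun t => (p t).2)]
  exact hp

/-- A functional induces a homomorphism from the fundamental group. -/
def IsFun.hom (hF : IsFun S F) (h : x₀ ∈ S) : FundamentalGroup S ⟨x₀, h⟩ →* G :=
  MonoidHom.mk' (fun g => F (cl_surj g).choose) (by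
    intro g g'
    have h1 := (cl_surj g).choose_spec
    have h2 := (cl_surj g').choose_spec
    have h3 := (cl_surj (g * g')).choose_spec
    rw [← hF.trans _ _ h2.1 h1.1]
    refine hF.homot ?_
    have h4 : cl S h (cl_surj (g * g')).choose =
        cl S h ((cl_surj g').choose.trans (cl_surj g).choose) := by
      rw [cl_trans h2.1 h1.1, h1.2, h2.2, h3.2]
    rw [cl_eq h3.1, cl_eq (trans_mem h2.1 h1.1)] at h4
    exact HIn.of_homotopic (Quotient.exact h4))

theorem IsFun.hom_cl (hF : IsFun S F) (h : x₀ ∈ S) {p : Path x₀ x₀} (hp : ∀ t, p t ∈ S) :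
    hF.hom h (cl S h p) = F p := by
  have h1 := (cl_surj (cl S h p)).choose_spec
  refine hF.homot ?_
  have h4 := (cl_eq h1.1).symm.trans (h1.2.trans (cl_eq hp))
  exact HIn.of_homotopic (Quotient.exact h4)

theorem IsFun.mono {T : Set E} (hF : IsFun S F) (h : T ⊆ S) : IsFun T F :=
  ⟨fun p q hp hq => hF.trans p q (fun t => h (hp t)) (fun t => h (hq t)),
    fun H => hF.homot (H.mono h)⟩

theorem IsFun.comp {G' : Type*} [Group G'] (hF : IsFun S F) (f : G →* G') :
    IsFun S (fun _ _ p => f (F p)) :=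
  ⟨fun p q hp hq => by rw [hF.trans p q hp hq, map_mul], fun H => by rw [hF.homot H]⟩

/-- The loop obtained by joining the endpoints to the base point. -/
def lp (τ : ∀ a : E, Path x₀ a) {a b : E} (p : Path a b) : Path x₀ x₀ :=
  ((τ a).trans p).trans (τ b).symm

theorem lp_mem {τ : ∀ a : E, Path x₀ a} (hτ : ∀ a ∈ S, ∀ t, τ a t ∈ S) {a b : E} {p : Path a b}
    (hp : ∀ t, p t ∈ S) (t : I) : lp τ p t ∈ S := by
  have ha : a ∈ S := by simpa using hp 0
  have hb : b ∈ S := by simpa using hp 1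
  exact trans_mem (trans_mem (hτ a ha) hp) (fun t => hτ b hb _) t

theorem isFun_lp {τ : ∀ a : E, Path x₀ a} (h : x₀ ∈ S) (hτ : ∀ a ∈ S, ∀ t, τ a t ∈ S) :
    IsFun S (fun _ _ p => cl S h (lp τ p)) := by
  constructor
  · intro a b c p q hp hq
    have ha : a ∈ S := by simpa using hp 0
    have hb : b ∈ S := by simpa using hp 1
    have hc : c ∈ S := by simpa using hq 1
    rw [← cl_trans (lp_mem hτ hp) (lp_mem hτ hq)]
    refine cl_homot ?_
    let p' := res S p hp ha hb
    let q' := res S q hq hb hc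
    let a' := res S (τ a) (hτ a ha) h ha
    let b' := res S (τ b) (hτ b hb) h hb
    let c' := res S (τ c) (hτ c hc) h hc
    have ep : p'.map continuous_subtype_val = p := by ext; rfl
    have eq : q'.map continuous_subtype_val = q := by ext; rfl
    have ea : a'.map continuous_subtype_val = τ a := by ext; rfl
    have eb : b'.map continuous_subtype_val = τ b := by ext; rfl
    have ec : c'.map continuous_subtype_val = τ c := by ext; rfl
    have H : ((a'.trans (p'.trans q')).trans c'.symm).Homotopic
        (((a'.trans p').trans b'.symm).trans ((b'.trans q').trans c'.symm)) := by
      refine Quotient.exact (?_ : Path.Homotopic.Quotient.mk _ = Path.Homotopic.Quotient.mk _)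
      simp only [Path.Homotopic.Quotient.mk_trans, Path.Homotopic.Quotient.mk_symm,
        Path.Homotopic.Quotient.trans_assoc]
      rw [← Path.Homotopic.Quotient.trans_assoc (Path.Homotopic.Quotient.mk b').symm,
        Path.Homotopic.Quotient.symm_trans, Path.Homotopic.Quotient.refl_trans]
    have := HIn.of_homotopic H
    simp only [Path.map_trans, ep, eq, ea] at this
    exact this
  · intro a b p q H
    have hp := H.left
    have hq := H.right
    have ha : a ∈ S := by simpa using hp 0
    have hb : b ∈ S := by simpa using hp 1
    refine cl_homot ?_
    let a' := res S (τ a) (hτ a ha) h ha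
    let b' := res S (τ b) (hτ b hb) h hb
    have H2 := H.homotopic hp hq ha hb
    have := HIn.of_homotopic
      (((Path.Homotopic.refl a').hcomp H2).hcomp (Path.Homotopic.refl b'.symm))
    simp only [Path.map_trans] at this
    exact this

theorem lp_loop {τ : ∀ a : E, Path x₀ a} (h : x₀ ∈ S) (hτ : τ x₀ = Path.refl x₀)
    {p : Path x₀ x₀} (hp : ∀ t, p t ∈ S) : cl S h (lp τ p) = cl S h p := by
  refine cl_homot ?_
  let p' := res S p hp h h
  have H : (((Path.refl _).trans p').trans (Path.refl _).symm).Homotopic p' := by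
    refine Quotient.exact (?_ : Path.Homotopic.Quotient.mk _ = Path.Homotopic.Quotient.mk _)
    simp
  have := HIn.of_homotopic H
  simp only [Path.map_trans] at this
  unfold lp
  rw [hτ]
  exact this

theorem cl_convex {B : Set E} (hB : Convex ℝ B) (hBS : B ⊆ S) (h : x₀ ∈ B) {p : Path x₀ x₀}
    (hp : ∀ t, p t ∈ B) : cl S (hBS h) p = 1 := by
  rw [cl_homot ((HIn.of_convex hB p (Path.refl x₀) hp (fun _ => h)).mono hBS)]
  rw [cl_eq (fun _ => hBS h)]
  rfl

theorem exists_tau {U V : Set E} (hW : Convex ℝ (U ∩ V)) (hx : x₀ ∈ U ∩ V)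
    (hUc : ∀ a ∈ U, JoinedIn U x₀ a) (hVc : ∀ a ∈ V, JoinedIn V x₀ a) (a : E) :
    ∃ τ : Path x₀ a, (a ∈ U → ∀ t, τ t ∈ U) ∧ (a ∈ V → ∀ t, τ t ∈ V) := by
  by_cases hU : a ∈ U
  · by_cases hV : a ∈ V
    · exact ⟨Path.segment x₀ a, fun _ t => (segment_mem hW hx ⟨hU, hV⟩ t).1,
        fun _ t => (segment_mem hW hx ⟨hU, hV⟩ t).2⟩
    · obtain ⟨p, hp⟩ := hUc a hU
      exact ⟨p, fun _ => hp, fun h => absurd h hV⟩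
  · by_cases hV : a ∈ V
    · obtain ⟨p, hp⟩ := hVc a hV
      exact ⟨p, fun h => absurd h hU, fun _ => hp⟩
    · exact ⟨Path.segment x₀ a, fun h => absurd h hU, fun h => absurd h hV⟩

/-- The van Kampen theorem for two open sets with convex intersection. -/
theorem vanKampen {X U V : Set E} (hU : IsOpen U) (hV : IsOpen V) (hX : X = U ∪ V)
    (hW : Convex ℝ (U ∩ V)) (hxX : x₀ ∈ X) (hxU : x₀ ∈ U) (hxV : x₀ ∈ V)
    (hUc : ∀ a ∈ U, JoinedIn U x₀ a) (hVc : ∀ a ∈ V, JoinedIn V x₀ a) :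
    Nonempty (FundamentalGroup X ⟨x₀, hxX⟩ ≃*
      Monoid.Coprod (FundamentalGroup U ⟨x₀, hxU⟩) (FundamentalGroup V ⟨x₀, hxV⟩)) := by
  classical
  have hUX : U ⊆ X := hX ▸ subset_union_left
  have hVX : V ⊆ X := hX ▸ subset_union_right
  obtain ⟨τ, hτ0, hτU, hτV⟩ : ∃ τ : ∀ a : E, Path x₀ a, τ x₀ = Path.refl x₀ ∧
      (∀ a ∈ U, ∀ t, τ a t ∈ U) ∧ (∀ a ∈ V, ∀ t, τ a t ∈ V) := by
    choose s h1 h2 using exists_tau hW ⟨hxU, hxV⟩ hUc hVc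
    refine ⟨fun a => if h : a = x₀ then (Path.refl x₀).cast rfl h else s a, by simp, ?_, ?_⟩
    · intro a ha t
      dsimp only
      split_ifs
      · exact hxU
      · exact h1 a ha t
    · intro a ha t
      dsimp only
      split_ifs
      · exact hxV
      · exact h2 a ha t
  have hτX : ∀ a ∈ X, ∀ t, τ a t ∈ X := by
    intro a ha t
    rw [hX] at ha
    rcases ha with ha | ha
    · exact hUX (hτU a ha t)
    · exact hVX (hτV a ha t)
  have fU := isFun_lp hxU hτU
  have fV := isFun_lp hxV hτV
  have fX := isFun_lp hxX hτX
  let F : ∀ ⦃a b : E⦄, Path a b →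
      Monoid.Coprod (FundamentalGroup U ⟨x₀, hxU⟩) (FundamentalGroup V ⟨x₀, hxV⟩) :=
    fun a b p => if ∀ t, p t ∈ U then inl (cl U hxU (lp τ p)) else inr (cl V hxV (lp τ p))
  have FU {a b : E} (p : Path a b) (hp : ∀ t, p t ∈ U) : F p = inl (cl U hxU (lp τ p)) :=
    if_pos hp
  have FV {a b : E} (p : Path a b) (hp : ∀ t, p t ∈ V) : F p = inr (cl V hxV (lp τ p)) := by
    by_cases h : ∀ t, p t ∈ U
    · rw [FU p h]
      have hl : ∀ t, lp τ p t ∈ U ∩ V := fun t => ⟨lp_mem hτU h t, lp_mem hτV hp t⟩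
      rw [cl_convex (S := U) hW inter_subset_left ⟨hxU, hxV⟩ hl,
        cl_convex (S := V) hW inter_subset_right ⟨hxU, hxV⟩ hl, map_one, map_one]
    · exact if_neg h
  let O : Bool → Set E := fun i => if i then U else V
  have hO : ∀ i, IsOpen (O i) := by
    rintro (_ | _)
    · exact hV
    · exact hU
  have hS : X = ⋃ i, O i := by
    rw [hX]
    ext z
    simp [O, or_comm]
  have hF : ∀ i, IsFun (O i) F := by
    rintro (_ | _)
    · refine ⟨fun p q hp hq => ?_, fun {a b p q} h => ?_⟩
      · rw [FV p hp, FV q hq, FV _ (trans_mem hp hq), fV.trans p q hp hq, map_mul]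
      · rw [FV p h.left, FV q h.right, fV.homot h]
    · refine ⟨fun p q hp hq => ?_, fun {a b p q} h => ?_⟩
      · rw [FU p hp, FU q hq, FU _ (trans_mem hp hq), fU.trans p q hp hq, map_mul]
      · rw [FU p h.left, FU q h.right, fU.homot h]
  obtain ⟨F', hF', hag⟩ := exists_extension hO hS hF
  let jU := (fX.mono hUX).hom hxU
  let jV := (fX.mono hVX).hom hxV
  let j := Monoid.Coprod.lift jU jV
  let k := hF'.hom hxX
  have hjU (p : Path x₀ x₀) (hp : ∀ t, p t ∈ U) : jU (cl U hxU p) = cl X hxX p := by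
    rw [IsFun.hom_cl _ _ hp]
    exact lp_loop hxX hτ0 (fun t => hUX (hp t))
  have hjV (p : Path x₀ x₀) (hp : ∀ t, p t ∈ V) : jV (cl V hxV p) = cl X hxX p := by
    rw [IsFun.hom_cl _ _ hp]
    exact lp_loop hxX hτ0 (fun t => hVX (hp t))
  refine ⟨MonoidHom.toMulEquiv k j ?_ ?_⟩
  · ext g
    obtain ⟨p, hp, rfl⟩ := cl_surj g
    have h1 : k (cl X hxX p) = F' p := hF'.hom_cl hxX hp
    change j (k (cl X hxX p)) = cl X hxX p
    rw [h1, ← lp_loop hxX hτ0 hp]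
    refine IsFun.ext_small hO hS (hF'.comp j) fX ?_ p hp
    rintro (_ | _) a b p hp
    · rw [hag false p hp, FV p hp, Monoid.Coprod.lift_apply_inr, hjV _ (lp_mem hτV hp)]
    · rw [hag true p hp, FU p hp, Monoid.Coprod.lift_apply_inl, hjU _ (lp_mem hτU hp)]
  · refine Monoid.Coprod.hom_ext ?_ ?_
    · ext g
      obtain ⟨p, hp, rfl⟩ := cl_surj g
      change k (j (inl (cl U hxU p))) = inl (cl U hxU p)
      rw [Monoid.Coprod.lift_apply_inl, hjU p hp]
      have h1 : k (cl X hxX p) = F' p := hF'.hom_cl hxX (fun t => hUX (hp t))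
      rw [h1, hag true p hp, FU p hp, lp_loop hxU hτ0 hp]
    · ext g
      obtain ⟨p, hp, rfl⟩ := cl_surj g
      change k (j (inr (cl V hxV p))) = inr (cl V hxV p)
      rw [Monoid.Coprod.lift_apply_inr, hjV p hp]
      have h1 : k (cl X hxX p) = F' p := hF'.hom_cl hxX (fun t => hVX (hp t))
      rw [h1, hag false p hp, FV p hp, lp_loop hxV hτ0 hp]

end vanKampen

/-- The part of the complement of `K` in an open half space containing `K` is path connected. -/
theorem joinedIn_half (hE : 1 < Module.rank ℝ E) {K : Set E} (hK : IsCompact K)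
    (hKd : IsTotallyDisconnected K) (f : E →L[ℝ] ℝ) {v x₀ : E} (hv : f v = 1) {a b : ℝ}
    (hKa : ∀ z ∈ K, f z < a) (h0 : a < f x₀) (h1 : f x₀ < b) {y : E}
    (hy : y ∈ {z | f z < b} ∩ Kᶜ) : JoinedIn ({z | f z < b} ∩ Kᶜ) x₀ y := by
  have hx0 : x₀ ∉ K := fun h => (hKa _ h).not_gt h0
  by_cases hym : f y ≤ f x₀
  · obtain ⟨p, hp⟩ := joinedIn_compl hE hK hKd hx0 hy.2
    let ρ : E → E := fun z => z - max (f z - f x₀) 0 • v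
    have hρ : Continuous ρ := by fun_prop
    have hfρ (z : E) : f (ρ z) = f z - max (f z - f x₀) 0 := by simp [ρ, hv]
    refine ⟨(p.map hρ).cast (by simp [ρ]) (by simp [ρ, hym]), fun t => ?_⟩
    change ρ (p t) ∈ _
    refine ⟨?_, fun h => ?_⟩
    · change f (ρ (p t)) < b
      rw [hfρ]
      have := le_max_left (f (p t) - f x₀) 0
      linarith
    · have h2 := hKa _ h
      rw [hfρ] at h2
      rcases max_cases (f (p t) - f x₀) 0 with h3 | h3
      · rw [h3.1] at h2
        linarith
      · refine hp t ?_
        simpa [ρ, h3.1] using h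
  · push Not at hym
    refine JoinedIn.of_segment_subset ?_
    have hc : Convex ℝ ({z | a < f z} ∩ {z | f z < b}) :=
      (convex_halfSpace_gt f.isLinear a).inter (convex_halfSpace_lt f.isLinear b)
    refine (hc.segment_subset ⟨h0, h1⟩ ⟨h0.trans hym, hy.1⟩).trans ?_
    exact fun z hz => ⟨hz.2, fun h => (hKa z h).not_gt hz.1⟩

/-- Restricting to the open half space does not change the fundamental group. -/
theorem pi1_half (hE : 1 < Module.rank ℝ E) {K : Set E} (hK : IsCompact K)
    (hKd : IsTotallyDisconnected K) (f : E →L[ℝ] ℝ) {v x₀ : E} (hv : f v = 1) {a b : ℝ}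
    (hKa : ∀ z ∈ K, f z < a) (h0 : a < f x₀) (h1 : f x₀ < b) (hx : x₀ ∈ Kᶜ)
    (hxU : x₀ ∈ {z | f z < b} ∩ Kᶜ) :
    Nonempty (FundamentalGroup ↥(Kᶜ) ⟨x₀, hx⟩ ≃*
      FundamentalGroup ↥({z | f z < b} ∩ Kᶜ) ⟨x₀, hxU⟩) := by
  have hV : Convex ℝ {z | a < f z} := convex_halfSpace_gt f.isLinear a
  have hW : ({z | f z < b} ∩ Kᶜ) ∩ {z | a < f z} = {z | a < f z} ∩ {z | f z < b} := by
    ext z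
    constructor
    · exact fun h => ⟨h.2, h.1.1⟩
    · exact fun h => ⟨⟨h.2, fun h' => (hKa z h').not_gt h.1⟩, h.1⟩
  have hX : Kᶜ = ({z | f z < b} ∩ Kᶜ) ∪ {z | a < f z} := by
    ext z
    constructor
    · intro hz
      rcases lt_or_ge (f z) b with h | h
      · exact Or.inl ⟨h, hz⟩
      · exact Or.inr ((h0.trans h1).trans_le h)
    · rintro (h | h)
      · exact h.2
      · exact fun h' => (hKa z h').not_gt h
  obtain ⟨e⟩ := vanKampen (x₀ := x₀) (X := Kᶜ)
    ((isOpen_lt f.continuous continuous_const).inter hK.isClosed.isOpen_compl)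
    (isOpen_lt continuous_const f.continuous : IsOpen {z | a < f z}) hX
    (by rw [hW]; exact hV.inter (convex_halfSpace_lt f.isLinear b)) hx hxU h0
    (fun y hy => joinedIn_half hE hK hKd f hv hKa h0 h1 hy)
    (fun y hy => JoinedIn.of_segment_subset (hV.segment_subset h0 hy))
  have hs : ∀ g : FundamentalGroup ↥{z | a < f z} ⟨x₀, h0⟩, g = 1 := by
    intro g
    obtain ⟨p, hp, rfl⟩ := cl_surj g
    exact cl_convex hV subset_rfl h0 hp
  refine ⟨e.trans (MonoidHom.toMulEquiv Monoid.Coprod.fst Monoid.Coprod.inl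
    (Monoid.Coprod.hom_ext rfl ?_) Monoid.Coprod.fst_comp_inl)⟩
  ext g
  rw [hs g, map_one, map_one]

/-- Change of base point. -/
theorem pi1_base {X : Set E} {x y : E} (h : JoinedIn X x y) (hx : x ∈ X) (hy : y ∈ X) :
    Nonempty (FundamentalGroup X ⟨x, hx⟩ ≃* FundamentalGroup X ⟨y, hy⟩) := by
  obtain ⟨p, hp⟩ := h
  exact ⟨FundamentalGroup.fundamentalGroupMulEquivOfPath (res X p hp hx hy)⟩

theorem pi1_compl_union (hE : 1 < Module.rank ℝ E) {K L : Set E} (hK : IsCompact K) (hL : IsCompact L)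
    (hKd : IsTotallyDisconnected K) (hLd : IsTotallyDisconnected L)
    (f : E →L[ℝ] ℝ) {v : E} (hv : f v = 1) {a b : ℝ} (hab : a < b)
    (hKa : ∀ z ∈ K, f z < a) (hLb : ∀ z ∈ L, b < f z) {x y z : E}
    (hx : x ∈ (K ∪ L)ᶜ) (hy : y ∈ Kᶜ) (hz : z ∈ Lᶜ) :
    Nonempty (FundamentalGroup ↥((K ∪ L)ᶜ) ⟨x, hx⟩ ≃*
      Monoid.Coprod (FundamentalGroup ↥(Kᶜ) ⟨y, hy⟩) (FundamentalGroup ↥(Lᶜ) ⟨z, hz⟩)) := by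
  obtain ⟨x₀, h0, h1⟩ : ∃ x₀ : E, a < f x₀ ∧ f x₀ < b := by
    refine ⟨((a + b) / 2) • v, ?_, ?_⟩ <;> rw [map_smul, hv, smul_eq_mul, mul_one] <;> linarith
  have hxK : x₀ ∈ Kᶜ := fun h => (hKa _ h).not_gt h0
  have hxL : x₀ ∈ Lᶜ := fun h => (hLb _ h).not_gt h1
  have hxX : x₀ ∈ (K ∪ L)ᶜ := fun h => h.elim hxK hxL
  have hKL : Disjoint K L := by
    rw [Set.disjoint_left]
    intro w hw hw'
    have := hKa w hw
    have := hLb w hw'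
    linarith
  have hv' : (-f) (-v) = 1 := by simp [hv]
  have hLb' : ∀ w ∈ L, (-f) w < -b := fun w hw => neg_lt_neg (hLb w hw)
  have h0' : (-f) x₀ < -a := neg_lt_neg h0
  have h1' : -b < (-f) x₀ := neg_lt_neg h1
  have hxU : x₀ ∈ {w | f w < b} ∩ Kᶜ := ⟨h1, hxK⟩
  have hxV : x₀ ∈ {w | (-f) w < -a} ∩ Lᶜ := ⟨h0', hxL⟩
  obtain ⟨eK⟩ := pi1_half hE hK hKd f hv hKa h0 h1 hxK hxU
  obtain ⟨eL⟩ := pi1_half hE hL hLd (-f) hv' hLb' h1' h0' hxL hxV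
  have hVa : ∀ w, w ∈ {w | (-f) w < -a} ↔ a < f w := fun w => by simp
  have hW : ({w | f w < b} ∩ Kᶜ) ∩ ({w | (-f) w < -a} ∩ Lᶜ) = {w | a < f w} ∩ {w | f w < b} := by
    ext w
    constructor
    · exact fun h => ⟨(hVa w).1 h.2.1, h.1.1⟩
    · exact fun h => ⟨⟨h.2, fun h' => (hKa w h').not_gt h.1⟩,
        ⟨(hVa w).2 h.1, fun h' => (hLb w h').not_gt h.2⟩⟩
  have hX : (K ∪ L)ᶜ = ({w | f w < b} ∩ Kᶜ) ∪ ({w | (-f) w < -a} ∩ Lᶜ) := by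
    ext w
    constructor
    · intro hw
      rw [compl_union] at hw
      rcases lt_or_ge (f w) b with h | h
      · exact Or.inl ⟨h, hw.1⟩
      · exact Or.inr ⟨(hVa w).2 (hab.trans_le h), hw.2⟩
    · rw [compl_union]
      rintro (h | h)
      · exact ⟨h.2, fun h' => (hLb w h').not_gt h.1⟩
      · exact ⟨fun h' => (hKa w h').not_gt ((hVa w).1 h.1), h.2⟩
  obtain ⟨e⟩ := vanKampen (x₀ := x₀) (X := (K ∪ L)ᶜ)
    ((isOpen_lt f.continuous continuous_const).inter hK.isClosed.isOpen_compl)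
    ((isOpen_lt (-f).continuous continuous_const).inter hL.isClosed.isOpen_compl) hX
    (by
      rw [hW]
      exact (convex_halfSpace_gt f.isLinear a).inter (convex_halfSpace_lt f.isLinear b))
    hxX hxU hxV
    (fun y hy => joinedIn_half hE hK hKd f hv hKa h0 h1 hy)
    (fun y hy => joinedIn_half hE hL hLd (-f) hv' hLb' h1' h0' hy)
  have hx' : x ∈ Kᶜ ∩ Lᶜ := by rwa [← compl_union]
  obtain ⟨eX⟩ := pi1_base (joinedIn_union hK.isClosed hL.isClosed hKL
    (joinedIn_compl hE hK hKd hx'.1 hxK) (joinedIn_compl hE hL hLd hx'.2 hxL)) hx hxX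
  obtain ⟨eY⟩ := pi1_base (joinedIn_compl hE hK hKd hxK hy) hxK hy
  obtain ⟨eZ⟩ := pi1_base (joinedIn_compl hE hL hLd hxL hz) hxL hz
  exact ⟨eX.trans (e.trans (MulEquiv.coprodCongr (eK.symm.trans eY) (eL.symm.trans eZ)))⟩

end SvK

/-- For Cantor sets contained in disjoint closed balls, the fundamental group of the
complement of the union is the free product of the fundamental groups of the complements. -/
theorem stmt_2 (c₁ c₂ : R3) (r₁ r₂ : ℝ)
    (C₁ C₂ : Set R3) (h₁ : IsCantorSubset C₁) (h₂ : IsCantorSubset C₂)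
    (hdisj : Disjoint (closedBall c₁ r₁) (closedBall c₂ r₂))
    (hB₁ : C₁ ⊆ closedBall c₁ r₁) (hB₂ : C₂ ⊆ closedBall c₂ r₂) :
    ∀ (x : R3) (hx : x ∈ (C₁ ∪ C₂)ᶜ) (y₁ : R3) (hy₁ : y₁ ∈ C₁ᶜ) (y₂ : R3) (hy₂ : y₂ ∈ C₂ᶜ),
      Nonempty (FundamentalGroup ↥((C₁ ∪ C₂)ᶜ) ⟨x, hx⟩ ≃*
        Monoid.Coprod (FundamentalGroup ↥(C₁ᶜ) ⟨y₁, hy₁⟩)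
          (FundamentalGroup ↥(C₂ᶜ) ⟨y₂, hy₂⟩)) := by
  intro x hx y₁ hy₁ y₂ hy₂
  obtain ⟨⟨p, hp⟩, hK, -, hKd⟩ := h₁
  obtain ⟨⟨q, hq⟩, hL, -, hLd⟩ := h₂
  obtain ⟨f, a, b, hfa, hab, hfb⟩ := geometric_hahn_banach_compact_closed
    (convex_closedBall c₁ r₁) (isCompact_closedBall c₁ r₁) (convex_closedBall c₂ r₂)
    isClosed_closedBall hdisj
  have hw : 0 < f (q - p) := by
    rw [map_sub]
    have h1 := hfa p (hB₁ hp)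
    have h2 := hfb q (hB₂ hq)
    linarith
  have hE : 1 < Module.rank ℝ R3 := by
    rw [← Module.finrank_eq_rank, finrank_euclideanSpace_fin]
    norm_num
  refine SvK.pi1_compl_union hE hK hL hKd hLd f (v := (f (q - p))⁻¹ • (q - p)) ?_ hab
    (fun z hz => hfa z (hB₁ hz)) (fun z hz => hfb z (hB₂ hz)) hx hy₁ hy₂
  rw [map_smul, smul_eq_mul, inv_mul_cancel₀ hw.ne']
end
end

section
/- Let C₁ and C₂ be Cantor sets in ℝ³ contained in disjoint closed balls B₁ and B₂ respectively, and let C = C₁ ∪ C₂. If ℝ³ \ C₁ is simply connected, then the fundamental group of ℝ³ \ C is isomorphic to the fundamental group of ℝ³ \ C₂. -/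
open Metric Set

noncomputable section

theorem exists_log_profinite {X : Type*} [TopologicalSpace X] [TotallyDisconnectedSpace X]
    [T2Space X] [CompactSpace X] (f : C(X, ℂ)) (hf : ∀ x, f x ≠ 0) :
    ∃ g : C(X, ℂ), ∀ x, Complex.exp (g x) = f x := by
  let f' : C(X, {z : ℂ // z ≠ 0}) := ⟨fun x => ⟨f x, hf x⟩, by fun_prop⟩
  let S : Set ({z : ℂ // z ≠ 0} × {z : ℂ // z ≠ 0}) := {q | (q.1 : ℂ) / q.2 ∈ Complex.slitPlane}
  have hSo : IsOpen S := by
    refine Complex.isOpen_slitPlane.preimage ?_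
    refine Continuous.div (by fun_prop) (by fun_prop) fun q => q.2.2
  have hS : S ∈ nhdsSet (diagonal {z : ℂ // z ≠ 0}) := by
    refine hSo.mem_nhdsSet.2 ?_
    rintro ⟨x, y⟩ (rfl : x = y)
    simp [S, div_self x.2]
  obtain ⟨n, g, h, hg, hgh⟩ := f'.exists_finite_approximation_of_mem_nhds_diagonal hS
  have hgl : Continuous (fun x => Complex.log (h (g x) : ℂ)) := by
    have : Continuous (fun i => Complex.log (h i : ℂ)) := continuous_of_discreteTopology
    exact this.comp hg
  have h1 : Continuous (fun x => Complex.log (f x / (h (g x) : ℂ))) := by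
    refine Continuous.clog ?_ fun x => hgh x
    have : Continuous (fun i => (h i : ℂ)) := continuous_of_discreteTopology
    exact f.continuous.div (this.comp hg) fun x => (h (g x)).2
  refine ⟨⟨fun x => Complex.log (f x / (h (g x) : ℂ)) + Complex.log (h (g x) : ℂ), h1.add hgl⟩,
    fun x => ?_⟩
  have := (h (g x)).2
  simp only [ContinuousMap.coe_mk]
  rw [Complex.exp_add, Complex.exp_log (div_ne_zero (hf x) this), Complex.exp_log this]
  field_simp

theorem no_circle_log (L : ℂ → ℂ) (hL : Continuous L) (p : ℂ) (ρ : ℝ) 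
    (h : ∀ z, ‖z - p‖ = ρ → Complex.exp (L z) = z - p) (hρ : 0 < ρ) : False := by
  let H : ℝ → ℂ := fun t => L (p + ρ * Complex.exp (t * Complex.I)) - t * Complex.I
  have hH : Continuous H := by fun_prop
  have he : ∀ t, Complex.exp (H t) = ρ := by
    intro t
    have : ‖(p + ρ * Complex.exp (t * Complex.I)) - p‖ = ρ := by
      simp [Complex.norm_exp_ofReal_mul_I, abs_of_pos hρ]
    simp only [H, Complex.exp_sub, h _ this]
    field_simp
    ring
  have hc := Complex.isCoveringMap_exp.eq_of_comp_eq (g₁ := H) (g₂ := fun _ => H 0) hH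
    continuous_const (by ext t; simp [he]) 0 rfl
  have := congrFun hc (2 * Real.pi)
  simp [H, Complex.exp_two_pi_mul_I, Real.pi_ne_zero] at this

theorem plane_component (K : Set ℂ) (hK : IsCompact K) (hd : IsTotallyDisconnected K)
    (p : ℂ) (hp : p ∉ K) (R : ℝ) (hU : connectedComponentIn Kᶜ p ⊆ ball 0 R) : False := by
  classical
  set U := connectedComponentIn Kᶜ p with hUdef
  have hUo : IsOpen U := hK.isClosed.isOpen_compl.connectedComponentIn
  have hpU : p ∈ U := mem_connectedComponentIn hp
  have hfr : frontier U ⊆ K := by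
    intro z hz
    by_contra hzK
    rw [hUo.frontier_eq] at hz
    have hW : IsOpen (connectedComponentIn Kᶜ z) := hK.isClosed.isOpen_compl.connectedComponentIn
    obtain ⟨w, hw1, hw2⟩ := mem_closure_iff.1 hz.1 _ hW (mem_connectedComponentIn hzK)
    have e1 := connectedComponentIn_eq hw1
    have e2 := connectedComponentIn_eq hw2
    exact hz.2 (by rw [hUdef, e2, ← e1]; exact mem_connectedComponentIn hzK)
  have : CompactSpace K := isCompact_iff_compactSpace.1 hK
  have : TotallyDisconnectedSpace K := totallyDisconnectedSpace_subtype_iff.2 hd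
  obtain ⟨g, hg⟩ := exists_log_profinite (X := K) ⟨fun x => (x : ℂ) - p, by fun_prop⟩
    (fun x => by
      simp only [ContinuousMap.coe_mk]
      rw [sub_ne_zero]; rintro rfl; exact hp x.2)
  obtain ⟨G, hG⟩ := ContinuousMap.exists_restrict_eq hK.isClosed g
  have hGK : ∀ z ∈ K, Complex.exp (G z) = z - p := by
    intro z hz
    have := hg ⟨z, hz⟩
    rw [← hG] at this
    simpa using this
  let F : ℂ → ℂ := U.piecewise (fun z => Complex.exp (G z)) (fun z => z - p)
  have hF : Continuous F := by
    refine Continuous.piecewise ?_ (by fun_prop) (by fun_prop)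
    intro z hz
    exact hGK z (hfr hz)
  have hF0 : ∀ z, F z ≠ 0 := by
    intro z
    by_cases hz : z ∈ U
    · simp [F, hz]
    · simp only [F, hz, not_false_eq_true, piecewise_eq_of_notMem]
      rw [sub_ne_zero]; rintro rfl; exact hz hpU
  obtain ⟨L, ⟨-, hL⟩, -⟩ := Complex.isCoveringMapOn_exp.existsUnique_continuousMap_lifts
    (⟨F, hF⟩ : C(ℂ, ℂ)) (a₀ := 0) (Complex.exp_log (hF0 0)) hF0
  have hR : 0 < R := by
    have := hU hpU
    rw [mem_ball_zero_iff] at this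
    exact (norm_nonneg _).trans_lt this
  refine no_circle_log L L.continuous p (R + ‖p‖) (fun z hz => ?_) (by positivity)
  have hzU : z ∉ U := by
    intro h
    have := hU h
    rw [mem_ball_zero_iff] at this
    have := norm_sub_le z p
    linarith
  have := congrFun hL z
  simpa [F, hzU] using this

theorem plane_connected (K : Set ℂ) (hK : IsCompact K) (hd : IsTotallyDisconnected K) 
    (p q : ℂ) (hp : p ∉ K) (hq : q ∉ K) : JoinedIn Kᶜ p q := by
  obtain ⟨R0, hR0⟩ := hK.isBounded.subset_ball 0
  let R := max R0 (max (‖p‖ + 1) (‖q‖ + 1))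
  have hKR : K ⊆ ball 0 R := hR0.trans (ball_subset_ball (le_max_left _ _))
  have hpR : ‖p‖ < R := (lt_add_one _).trans_le ((le_max_left _ _).trans (le_max_right _ _))
  have hqR : ‖q‖ < R := (lt_add_one _).trans_le ((le_max_right _ _).trans (le_max_right _ _))
  clear_value R
  have hR : 0 < R := (norm_nonneg p).trans_lt hpR
  have hsph : sphere (0:ℂ) R ⊆ Kᶜ := by
    intro z hz hzK
    have := hKR hzK
    simp at hz this
    linarith
  have key : ∀ p, p ∉ K → ‖p‖ < R → (R : ℂ) ∈ connectedComponentIn Kᶜ p := by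
    intro p hp hpR
    have : ∃ z ∈ connectedComponentIn Kᶜ p, ‖z‖ = R := by
      by_contra! hcon
      refine plane_component K hK hd p hp R fun z hz => ?_
      rw [mem_ball_zero_iff]
      by_contra! hz'
      obtain ⟨w, hw, hw'⟩ := (isPreconnected_connectedComponentIn (F := Kᶜ) (x := p)).intermediate_value
        (mem_connectedComponentIn hp) hz (f := fun z => ‖z‖) (by fun_prop) ⟨hpR.le, hz'⟩
      exact hcon w hw hw'
    obtain ⟨z, hz, hzR⟩ := this
    rw [connectedComponentIn_eq hz]
    refine (isPreconnected_sphere (by simp) (0:ℂ) R).subset_connectedComponentIn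
      (by simpa using hzR) hsph ?_
    simp [abs_of_pos hR]
  have hp' := key p hp hpR
  have hq' := key q hq hqR
  have hqp : q ∈ connectedComponentIn Kᶜ p := by
    rw [connectedComponentIn_eq hp', ← connectedComponentIn_eq hq']
    exact mem_connectedComponentIn hq
  have hc : IsConnected (connectedComponentIn Kᶜ p) := isConnected_connectedComponentIn_iff.2 hp
  have := (hK.isClosed.isOpen_compl.connectedComponentIn.isConnected_iff_isPathConnected.1 hc)
  exact (this.joinedIn p (mem_connectedComponentIn hp) q hqp).mono (connectedComponentIn_subset _ _)

theorem space_connected {E : Type*} [NormedAddCommGroup E] [NormedSpace ℝ E]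
    (hE : 1 < Module.finrank ℝ E) (K : Set E) (hK : IsCompact K)
    (hd : IsTotallyDisconnected K) : IsPathConnected Kᶜ := by
  have : FiniteDimensional ℝ E := Module.finite_of_finrank_pos (by omega)
  have hrank : 1 < Module.rank ℝ E := by
    rw [← Module.finrank_eq_rank]; exact_mod_cast hE
  have hj : ∀ p ∉ K, ∀ q ∉ K, JoinedIn Kᶜ p q := by
    intro p hp q hq
    by_cases hpq : p = q
    · subst hpq; exact JoinedIn.refl hp
    obtain ⟨w, hw⟩ := exists_linearIndependent_pair_of_one_lt_rank hrank
      (sub_ne_zero.2 (Ne.symm hpq))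
    let T : ℂ →ₗ[ℝ] E := Complex.reLm.smulRight (q - p) + Complex.imLm.smulRight w
    have hT : Function.Injective T := by
      rw [injective_iff_map_eq_zero]
      intro z hz
      obtain ⟨h1, h2⟩ := LinearIndependent.pair_iff.1 hw z.re z.im (by simpa [T] using hz)
      exact Complex.ext h1 h2
    have hTe := LinearMap.isClosedEmbedding_of_injective (f := T) (LinearMap.ker_eq_bot.2 hT)
    let e : ℂ → E := fun z => p + T z
    have he : Topology.IsClosedEmbedding e := (Homeomorph.addLeft p).isClosedEmbedding.comp hTe
    have hK' : IsCompact (e ⁻¹' K) := he.isCompact_preimage hK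
    have hd' : IsTotallyDisconnected (e ⁻¹' K) :=
      he.isEmbedding.isTotallyDisconnected
        (fun t ht => hd t (ht.trans (image_preimage_subset _ _)))
    have e0 : e 0 = p := by simp [e]
    have e1 : e 1 = q := by simp [e, T]
    have := plane_connected _ hK' hd' 0 1 (by simpa [e0] using hp) (by simpa [e1] using hq)
    have := this.map_continuousOn he.continuous.continuousOn
    rw [e0, e1] at this
    exact this.mono (by rintro _ ⟨z, hz, rfl⟩; exact hz)
  rw [isPathConnected_iff]
  refine ⟨?_, fun p hp q hq => hj p hp q hq⟩
  by_contra! h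
  have hu : K = univ := by simpa using h
  rw [hu] at hd
  have : Nontrivial E := Module.nontrivial_of_finrank_pos (R := ℝ) (by omega)
  obtain ⟨x, y, hxy⟩ := exists_pair_ne E
  exact hxy (hd _ (subset_univ _) isPreconnected_univ (mem_univ x) (mem_univ y))

theorem path_induction {X : Type*} [TopologicalSpace X] (U V : Set X)
    (hUV : interior U ∪ interior V = univ) (P : ∀ x y : X, Path x y → Prop)
    (hhom : ∀ x y (γ δ : Path x y), γ.Homotopic δ → P x y γ → P x y δ)
    (htr : ∀ x y z (γ : Path x y) (δ : Path y z), P x y γ → P y z δ → P x z (γ.trans δ))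
    (hU : ∀ x y (γ : Path x y), range γ ⊆ U → P x y γ)
    (hV : ∀ x y (γ : Path x y), range γ ⊆ V → P x y γ) (x y : X) (γ : Path x y) : P x y γ := by
  have hcast : ∀ a b a' b' (ha : a' = a) (hb : b' = b) (γ : Path a b),
      P a' b' (γ.cast ha hb) → P a b γ := by
    intro a b a' b' ha hb γ h
    subst ha hb
    exact h
  let c : Bool → Set unitInterval := fun b => γ ⁻¹' (interior (if b then U else V))
  obtain ⟨t, t0, tm, ⟨N, hN⟩, ht⟩ := exists_monotone_Icc_subset_open_cover_unitInterval (c := c)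
    (fun b => isOpen_interior.preimage γ.continuous) (by
      intro s _
      have : γ s ∈ interior U ∪ interior V := hUV ▸ mem_univ _
      rcases this with h | h
      · exact mem_iUnion.2 ⟨true, by simpa [c] using h⟩
      · exact mem_iUnion.2 ⟨false, by simpa [c] using h⟩)
  have hsmall : ∀ n, P _ _ (γ.subpath (t n) (t (n+1))) := by
    intro n
    obtain ⟨b, hb⟩ := ht n
    have hr := γ.range_subpath_of_le _ _ (tm (Nat.le_succ n))
    cases b with
    | true =>
      refine hU _ _ _ ?_
      rw [hr]
      rintro _ ⟨s, hs, rfl⟩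
      exact interior_subset (by simpa [c] using hb hs)
    | false =>
      refine hV _ _ _ ?_
      rw [hr]
      rintro _ ⟨s, hs, rfl⟩
      exact interior_subset (by simpa [c] using hb hs)
  have hall : ∀ n, P _ _ (γ.subpath (t 0) (t (n+1))) := by
    intro n
    induction n with
    | zero => exact hsmall 0
    | succ n ih =>
      exact hhom _ _ _ _ ⟨Path.Homotopy.subpathTransSubpath γ _ _ _⟩ (htr _ _ _ _ _ ih (hsmall _))
  have := hall N
  rw [t0, hN (N+1) (Nat.le_succ N), Path.subpath_zero_one] at this
  exact hcast _ _ _ _ _ _ _ this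

theorem const_square {X : Type*} [TopologicalSpace X] {x y x' y' : X} (hx : x' = x) (hy : y' = y)
    (γ : Path x y) (γ' : Path x' y') (h : ∀ t, γ' t = γ t) :
    (γ.trans ((Path.refl y).cast rfl hy)).Homotopic (((Path.refl x).cast rfl hx).trans γ') := by
  subst hx hy
  have : γ' = γ := Path.ext (funext h)
  subst this
  exact Path.Homotopic.trans ⟨Path.Homotopy.transRefl _⟩
    (Path.Homotopic.symm ⟨Path.Homotopy.reflTrans _⟩)

theorem const_square' {X : Type*} [TopologicalSpace X] {x y x' y' : X} (hx : x' = x) (hy : y' = y)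
    (γ : Path x y) (γ' : Path x' y') 
    (h : (γ.trans ((Path.refl y).cast rfl hy)).Homotopic (((Path.refl x).cast rfl hx).trans γ')) :
    γ.Homotopic (γ'.cast hx.symm hy.symm) := by
  subst hx hy
  exact Path.Homotopic.trans (Path.Homotopic.symm ⟨Path.Homotopy.transRefl _⟩)
    (h.trans ⟨Path.Homotopy.reflTrans _⟩)

theorem square_comp {X : Type*} [TopologicalSpace X] {x y z x' y' z' : X} 
    (a : Path x x') (b : Path y y') (c : Path z z')
    (γ : Path x y) (γ' : Path x' y') (δ : Path y z) (δ' : Path y' z')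
    (h : (γ.trans b).Homotopic (a.trans γ')) (h' : (δ.trans c).Homotopic (b.trans δ')) :
    ((γ.trans δ).trans c).Homotopic (a.trans (γ'.trans δ')) := by
  have A : ∀ {x y z w : X} (p : Path x y) (q : Path y z) (r : Path z w),
    ((p.trans q).trans r).Homotopic (p.trans (q.trans r)) := fun p q r =>
      ⟨Path.Homotopy.transAssoc p q r⟩
  exact (A _ _ _).trans <| ((Path.Homotopic.refl _).hcomp h').trans <| (A _ _ _).symm.trans <|
    (h.hcomp (Path.Homotopic.refl _)).trans (A _ _ _)

theorem abstract_vk {X Y Z : Type*} [TopologicalSpace X] [TopologicalSpace Y] [TopologicalSpace Z]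
    [SimplyConnectedSpace Z] (i : C(X, Y)) (σ : C(Y, X)) (j : C(X, Z)) (ρ : C(Z, X))
    (U V : Set X) (hUV : interior U ∪ interior V = univ) (hρU : ∀ z, ρ z ∈ U)
    (hρ : ∀ x ∈ U, ρ (j x) = x) (hσ : ∀ x ∈ V, σ (i x) = x) (hσU : ∀ x ∈ U, σ (i x) ∈ U)
    (p : X) (hp : p ∈ V) 
    (hs : ∀ γ : Path (i p) (i p), ∃ δ : Path p p, (δ.map i.continuous).Homotopic γ) :
    Nonempty (FundamentalGroup X p ≃* FundamentalGroup Y (i p)) := by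
  classical
  have hUh : ∀ x y (γ δ : Path x y), range γ ⊆ U → range δ ⊆ U → γ.Homotopic δ := by
    intro x y γ δ hγ hδ
    have hx : ρ (j x) = x := hρ x (by simpa using hγ (mem_range_self 0))
    have hy : ρ (j y) = y := hρ y (by simpa using hγ (mem_range_self 1))
    have h := SimplyConnectedSpace.paths_homotopic (γ.map j.continuous) (δ.map j.continuous)
    have h2 := h.map ρ
    have e1 : γ = ((γ.map j.continuous).map ρ.continuous).cast hx.symm hy.symm := by
      ext t; simp [hρ _ (hγ (mem_range_self t))]
    have e2 : δ = ((δ.map j.continuous).map ρ.continuous).cast hx.symm hy.symm := by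
      ext t; simp [hρ _ (hδ (mem_range_self t))]
    rw [e1, e2]
    obtain ⟨H⟩ := h2
    exact ⟨H.cast rfl rfl⟩
  have hUj : ∀ x y, x ∈ U → y ∈ U → ∃ γ : Path x y, range γ ⊆ U := by
    intro x y hx hy
    refine ⟨((PathConnectedSpace.somePath (j x) (j y)).map ρ.continuous).cast
      (hρ x hx).symm (hρ y hy).symm, ?_⟩
    rintro _ ⟨t, rfl⟩
    exact hρU _
  have hτ : ∀ x, ∃ τ : Path x (σ (i x)), (x ∈ U → range τ ⊆ U) ∧
      (∀ h : x ∈ V, τ = (Path.refl x).cast rfl (hσ x h)) := by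
    intro x
    by_cases h : x ∈ V
    · refine ⟨(Path.refl x).cast rfl (hσ x h), fun hU => ?_, fun _ => rfl⟩
      rintro _ ⟨t, rfl⟩
      exact hU
    · have : x ∈ U := by
        have : x ∈ interior U ∪ interior V := hUV ▸ mem_univ _
        rcases this with h' | h'
        · exact interior_subset h'
        · exact absurd (interior_subset h') h
      obtain ⟨γ, hγ⟩ := hUj x _ this (hσU x this)
      exact ⟨γ, fun _ => hγ, fun h' => absurd h' h⟩
  choose τ hτU hτV using hτ
  have nat : ∀ x y (γ : Path x y), (γ.trans (τ y)).Homotopic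
      ((τ x).trans ((γ.map i.continuous).map σ.continuous)) := by
    refine path_induction U V hUV _ ?_ ?_ ?_ ?_
    · intro x y γ δ h h'
      exact (h.symm.hcomp (Path.Homotopic.refl _)).trans (h'.trans
        ((Path.Homotopic.refl _).hcomp ((h.map i).map σ)))
    · intro x y z γ δ h h'
      rw [Path.map_trans, Path.map_trans]
      exact square_comp _ _ _ _ _ _ _ h h'
    · intro x y γ hγ
      have hx : x ∈ U := by simpa using hγ (mem_range_self 0)
      have hy : y ∈ U := by simpa using hγ (mem_range_self 1)
      refine hUh _ _ _ _ ?_ ?_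
      · rw [Path.trans_range]
        exact union_subset hγ (hτU y hy)
      · rw [Path.trans_range]
        refine union_subset (hτU x hx) ?_
        rintro _ ⟨t, rfl⟩
        exact hσU _ (hγ (mem_range_self t))
    · intro x y γ hγ
      have hx : x ∈ V := by simpa using hγ (mem_range_self 0)
      have hy : y ∈ V := by simpa using hγ (mem_range_self 1)
      rw [hτV x hx, hτV y hy]
      exact const_square _ _ _ _ fun t => hσ _ (hγ (mem_range_self t))
  have key : ∀ γ : Path p p, γ.Homotopic
      (((γ.map i.continuous).map σ.continuous).cast (hσ p hp).symm (hσ p hp).symm) := by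
    intro γ
    have := nat p p γ
    rw [hτV p hp] at this
    exact const_square' _ _ _ _ this
  refine ⟨MulEquiv.ofBijective (FundamentalGroup.map i p) ⟨?_, ?_⟩⟩
  · intro a b hab
    induction a using Path.Homotopic.Quotient.ind with | _ a => ?_
    induction b using Path.Homotopic.Quotient.ind with | _ b => ?_
    have h : (a.map i.continuous).Homotopic (b.map i.continuous) := Quotient.exact hab
    refine Quotient.sound ?_
    refine (key a).trans (Path.Homotopic.trans ?_ (key b).symm)
    obtain ⟨H⟩ := h.map σ
    exact ⟨H.cast rfl rfl⟩
  · intro c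
    induction c using Path.Homotopic.Quotient.ind with | _ c => ?_
    obtain ⟨δ, hδ⟩ := hs c
    exact ⟨Path.Homotopic.Quotient.mk δ, Quotient.sound hδ⟩
/-- For Cantor sets in disjoint closed balls, if the complement of the first is simply
connected then the fundamental group of the complement of the union is isomorphic to the
fundamental group of the complement of the second. -/
theorem stmt_3 (c₁ c₂ : R3) (r₁ r₂ : ℝ)
    (C₁ C₂ : Set R3) (h₁ : IsCantorSubset C₁) (h₂ : IsCantorSubset C₂)
    (hdisj : Disjoint (closedBall c₁ r₁) (closedBall c₂ r₂))
    (hB₁ : C₁ ⊆ closedBall c₁ r₁) (hB₂ : C₂ ⊆ closedBall c₂ r₂)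
    (hsc : SimplyConnectedSpace ↥(C₁ᶜ)) :
    ∀ (x : R3) (hx : x ∈ (C₁ ∪ C₂)ᶜ) (y : R3) (hy : y ∈ C₂ᶜ),
      Nonempty (FundamentalGroup ↥((C₁ ∪ C₂)ᶜ) ⟨x, hx⟩ ≃*
        FundamentalGroup ↥(C₂ᶜ) ⟨y, hy⟩) := by
  intro x hx y hy
  obtain ⟨hn₁, hc₁, -, hd₁⟩ := h₁
  obtain ⟨hn₂, hc₂, -, hd₂⟩ := h₂
  obtain ⟨f, u, v, hfu, huv, hfv⟩ := geometric_hahn_banach_compact_closed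
    (convex_closedBall c₁ r₁) (isCompact_closedBall c₁ r₁) (convex_closedBall c₂ r₂)
    isClosed_closedBall hdisj
  replace hfu : ∀ a ∈ C₁, f a < u := fun a ha => hfu a (hB₁ ha)
  replace hfv : ∀ a ∈ C₂, v < f a := fun a ha => hfv a (hB₂ ha)
  obtain ⟨w, hw⟩ : ∃ w, f w = 1 := by
    obtain ⟨a, ha⟩ := hn₁
    obtain ⟨b, hb⟩ := hn₂
    have h : f (b - a) ≠ 0 := by
      rw [map_sub]; have := hfu a ha; have := hfv b hb; intro h; linarith
    exact ⟨(f (b - a))⁻¹ • (b - a), by rw [map_smul, smul_eq_mul, inv_mul_cancel₀ h]⟩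
  have hdim : 1 < Module.finrank ℝ R3 := by simp [R3]
  have hd : IsTotallyDisconnected (C₁ ∪ C₂) := by
    intro t ht htp
    have hsub := htp.subset_or_subset (u := {z | f z < u}) (v := {z | v < f z})
      (isOpen_lt f.continuous continuous_const) (isOpen_lt continuous_const f.continuous)
      (by
        rw [Set.disjoint_left]
        intro z (hz : f z < u) (hz' : v < f z)
        linarith)
      (fun z hz => (ht hz).imp (hfu z) (hfv z))
    rcases hsub with h | h
    · refine hd₁ t (fun z hz => (ht hz).resolve_right fun hz2 => ?_) htp
      have h3 : f z < u := h hz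
      linarith [hfv z hz2]
    · refine hd₂ t (fun z hz => (ht hz).resolve_left fun hz2 => ?_) htp
      have h3 : v < f z := h hz
      linarith [hfu z hz2]
  have : PathConnectedSpace ↥(C₂ᶜ) :=
    isPathConnected_iff_pathConnectedSpace.1 (space_connected hdim C₂ hc₂ hd₂)
  have : PathConnectedSpace ↥((C₁ ∪ C₂)ᶜ) :=
    isPathConnected_iff_pathConnectedSpace.1 (space_connected hdim _ (hc₁.union hc₂) hd)
  have hpw : f (((u + v) / 2) • w) = (u + v) / 2 := by rw [map_smul, hw]; simp
  have hpX : ((u + v) / 2) • w ∈ (C₁ ∪ C₂)ᶜ := by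
    rintro (h | h)
    · have := hfu _ h; linarith
    · have := hfv _ h; linarith
  let p : ↥((C₁ ∪ C₂)ᶜ) := ⟨((u + v) / 2) • w, hpX⟩
  let i : C(↥((C₁ ∪ C₂)ᶜ), ↥(C₂ᶜ)) :=
    ⟨fun z => ⟨z, fun h => z.2 (Or.inr h)⟩, by fun_prop⟩
  let j : C(↥((C₁ ∪ C₂)ᶜ), ↥(C₁ᶜ)) :=
    ⟨fun z => ⟨z, fun h => z.2 (Or.inl h)⟩, by fun_prop⟩
  let S : R3 → R3 := fun z => z + max (u - f z) 0 • w
  let T : R3 → R3 := fun z => z - max (f z - v) 0 • w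
  have hSf : ∀ z, f (S z) = max u (f z) := by
    intro z
    simp only [S, map_add, map_smul, hw, smul_eq_mul, mul_one]
    rw [← max_add_add_left]; simp
  have hTf : ∀ z, f (T z) = min v (f z) := by
    intro z
    simp only [T, map_sub, map_smul, hw, smul_eq_mul, mul_one]
    rcases le_total v (f z) with h | h
    · rw [max_eq_left (by linarith), min_eq_left h]; ring
    · rw [max_eq_right (by linarith), min_eq_right h]; ring
  have hSid : ∀ z, u ≤ f z → S z = z := by
    intro z h
    simp [S, max_eq_right (sub_nonpos.2 h)]
  have hTid : ∀ z, f z ≤ v → T z = z := by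
    intro z h
    simp [T, max_eq_right (sub_nonpos.2 h)]
  have hSc : Continuous S := by fun_prop
  have hTc : Continuous T := by fun_prop
  have hSm : ∀ z ∈ C₂ᶜ, S z ∈ (C₁ ∪ C₂)ᶜ := by
    rintro z hz (h | h)
    · have := hfu _ h
      rw [hSf] at this
      exact absurd (le_max_left _ _) (not_le.2 this)
    · have h2 := hfv _ h
      rw [hSf] at h2
      rcases lt_max_iff.1 h2 with h3 | h3
      · linarith
      · rw [hSid z (by linarith)] at h; exact hz h
  have hTm : ∀ z ∈ C₁ᶜ, T z ∈ (C₁ ∪ C₂)ᶜ := by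
    rintro z hz (h | h)
    · have h2 := hfu _ h
      rw [hTf] at h2
      rcases min_lt_iff.1 h2 with h3 | h3
      · linarith
      · rw [hTid z (by linarith)] at h; exact hz h
    · have := hfv _ h
      rw [hTf] at this
      exact absurd (min_le_left _ _) (not_le.2 this)
  let σ : C(↥(C₂ᶜ), ↥((C₁ ∪ C₂)ᶜ)) := ⟨fun z => ⟨S z, hSm z z.2⟩, by fun_prop⟩
  let ρ : C(↥(C₁ᶜ), ↥((C₁ ∪ C₂)ᶜ)) := ⟨fun z => ⟨T z, hTm z z.2⟩, by fun_prop⟩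
  let U : Set ↥((C₁ ∪ C₂)ᶜ) := {z | f z ≤ v}
  let V : Set ↥((C₁ ∪ C₂)ᶜ) := {z | u ≤ f z}
  have hpV : u ≤ f p := by
    change u ≤ f (((u + v) / 2) • w); rw [hpw]; linarith
  have hσp : ∀ z ∈ V, σ (i z) = z := fun z hz => Subtype.ext (hSid z hz)
  have main := abstract_vk i σ j ρ U V ?_ ?_ ?_ hσp ?_ p hpV ?_
  · obtain ⟨e⟩ := main
    exact ⟨(FundamentalGroup.fundamentalGroupMulEquivOfPathConnected _ p).trans
      (e.trans (FundamentalGroup.fundamentalGroupMulEquivOfPathConnected _ _))⟩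
  · refine eq_univ_of_forall fun z => ?_
    rcases lt_or_ge (f z) v with h | h
    · left
      exact interior_maximal (t := {z : ↥((C₁ ∪ C₂)ᶜ) | f z < v})
        (fun z (hz : f z < v) => hz.le) (isOpen_lt (by fun_prop) (by fun_prop)) h
    · right
      exact interior_maximal (t := {z : ↥((C₁ ∪ C₂)ᶜ) | u < f z})
        (fun z (hz : u < f z) => hz.le) (isOpen_lt (by fun_prop) (by fun_prop)) (huv.trans_le h)
  · intro z
    change f (T z) ≤ v
    rw [hTf]; exact min_le_left _ _
  · intro z hz
    exact Subtype.ext (hTid z hz)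
  · intro z hz
    change f (S z) ≤ v
    rw [hSf]; exact max_le huv.le hz
  · intro γ
    have hσp' : σ (i p) = p := hσp p hpV
    refine ⟨(γ.map σ.continuous).cast hσp'.symm hσp'.symm, Path.Homotopic.symm ?_⟩
    have hmem : ∀ (s : unitInterval) (z : ↥(C₂ᶜ)),
        (z : R3) + (s * max (u - f z) 0) • w ∈ C₂ᶜ := by
      intro s z hz
      have h := hfv _ hz
      rcases le_total u (f z) with h2 | h2
      · rw [max_eq_right (by linarith)] at hz
        simp at hz
        exact z.2 hz
      · rw [max_eq_left (by linarith), map_add, map_smul, hw, smul_eq_mul, mul_one] at h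
        have := mul_le_of_le_one_left (sub_nonneg.2 h2) s.2.2
        linarith
    refine ⟨⟨⟨⟨fun q => ⟨_, hmem q.1 (γ q.2)⟩, ?_⟩, ?_, ?_⟩, ?_⟩⟩
    · fun_prop
    · intro t
      simp
    · intro t
      apply Subtype.ext
      simp [i, σ, S]
    · intro s t ht
      have hmax : max (u - f p) 0 = 0 := max_eq_right (by linarith)
      have hγ : γ t = i p := by
        rcases ht with rfl | rfl <;> simp
      apply Subtype.ext
      change ((γ t : ↥(C₂ᶜ)) : R3) + ((s : ℝ) * max (u - f (γ t)) 0) • w = γ t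
      rw [hγ]
      change (p : R3) + ((s : ℝ) * max (u - f p) 0) • w = p
      rw [hmax]; simp
end
end

section
/- Let A be the straight line segment in ℝ³ from (-1,0,0) to (1,0,0). Then there exists a continuous, closed, surjective map f : ℝ³ → ℝ³ such that f⁻¹({0}) = A, f is injective on ℝ³ \ A, f maps the closed unit ball centered at (-2,0,0) onto the closed unit ball centered at (-1,0,0), and f maps the closed unit ball centered at (2,0,0) onto the closed unit ball centered at (1,0,0). Consequently the quotient space ℝ³/A obtained by collapsing A to a point is homeomorphic to ℝ³. -/
open Metric Set

noncomputable section

/-- The straight segment from (-1,0,0) to (1,0,0). -/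
def segA : Set R3 := segment ℝ (pt (-1) 0 0) (pt 1 0 0)

/-- The equivalence relation on ℝ³ collapsing the set `A` to a single point. -/
def collapseSetoid (A : Set R3) : Setoid R3 where
  r x y := x = y ∨ (x ∈ A ∧ y ∈ A)
  iseqv := by
    refine ⟨fun _ => Or.inl rfl, ?_, ?_⟩
    · rintro x y (rfl | ⟨hx, hy⟩)
      · exact Or.inl rfl
      · exact Or.inr ⟨hy, hx⟩
    · rintro x y z (rfl | ⟨hx, hy⟩) (rfl | ⟨hy', hz⟩)
      · exact Or.inl rfl
      · exact Or.inr ⟨hy', hz⟩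
      · exact Or.inr ⟨hx, hy⟩
      · exact Or.inr ⟨hx, hz⟩

lemma sqrt_le_one_iff3 (x : ℝ) : √x ≤ 1 ↔ x ≤ 1 := by
  rw [Real.sqrt_le_iff]; simp

lemma pt_zero (a b c : ℝ) : (pt a b c) 0 = a := rfl
lemma pt_one (a b c : ℝ) : (pt a b c) 1 = b := rfl
lemma pt_two (a b c : ℝ) : (pt a b c) 2 = c := rfl

lemma ext3 {p q : R3} (h0 : p 0 = q 0) (h1 : p 1 = q 1) (h2 : p 2 = q 2) : p = q := by
  ext i
  fin_cases i
  · exact h0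
  · exact h1
  · exact h2

lemma mem_segA (p : R3) : p ∈ segA ↔ (-1 ≤ p 0 ∧ p 0 ≤ 1) ∧ p 1 = 0 ∧ p 2 = 0 := by
  unfold segA
  constructor
  · rintro ⟨a, b, ha, hb, hab, rfl⟩
    simp only [PiLp.add_apply, PiLp.smul_apply, pt_zero, pt_one, pt_two, smul_eq_mul]
    refine ⟨⟨by linarith, by linarith⟩, by ring, by ring⟩
  · rintro ⟨⟨h1, h2⟩, h3, h4⟩
    refine ⟨(1 - p 0) / 2, (1 + p 0) / 2, by linarith, by linarith, by ring, ?_⟩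
    apply ext3 <;>
      simp only [PiLp.add_apply, PiLp.smul_apply, pt_zero, pt_one, pt_two, smul_eq_mul, h3, h4] <;>
      ring

/-- Clamp to [-1,1]. -/
def clamp1 (x : ℝ) : ℝ := max (-1) (min 1 x)

lemma clamp1_bd (x : ℝ) : -1 ≤ clamp1 x ∧ clamp1 x ≤ 1 := by
  unfold clamp1
  exact ⟨le_max_left _ _, max_le (by norm_num) (min_le_left _ _)⟩

lemma clamp1_cases (x : ℝ) :
    (x ≤ -1 ∧ clamp1 x = -1) ∨ (-1 < x ∧ x < 1 ∧ clamp1 x = x) ∨ (1 ≤ x ∧ clamp1 x = 1) := by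
  unfold clamp1
  rcases le_or_gt x (-1) with h | h
  · left
    exact ⟨h, max_eq_left ((min_le_right _ _).trans h)⟩
  · rcases lt_or_ge x 1 with h' | h'
    · right; left
      exact ⟨h, h', by rw [min_eq_right h'.le, max_eq_right h.le]⟩
    · right; right
      exact ⟨h', by rw [min_eq_left h', max_eq_right (by norm_num)]⟩

lemma clamp1_cont : Continuous clamp1 := by unfold clamp1; fun_prop

/-- The width function. -/
def wid (p : R3) : ℝ := 1 + (p 1 ^ 2 + p 2 ^ 2) / 2

lemma wid_ge (p : R3) : 1 ≤ wid p := by unfold wid; nlinarith [sq_nonneg (p 1), sq_nonneg (p 2)]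

/-- The collapsing map. -/
def fmap (p : R3) : R3 := pt (p 0 - clamp1 (p 0 / wid p)) (p 1) (p 2)

lemma fmap_cont : Continuous fmap := by
  have h0 : Continuous (fun p : R3 => p 0 - clamp1 (p 0 / wid p)) := by
    have hw : Continuous wid := by unfold wid; fun_prop
    have : Continuous (fun p : R3 => p 0 / wid p) :=
      Continuous.div (by fun_prop) hw (fun p => by have := wid_ge p; positivity)
    exact (by fun_prop : Continuous fun p : R3 => p 0).sub (clamp1_cont.comp this)
  unfold fmap pt
  refine (PiLp.continuous_toLp 2 _).comp (continuous_pi fun i => ?_)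
  fin_cases i
  · exact h0
  · exact (by fun_prop : Continuous fun p : R3 => p 1)
  · exact (by fun_prop : Continuous fun p : R3 => p 2)

lemma fmap_dist (p : R3) : dist (fmap p) p ≤ 1 := by
  rw [EuclideanSpace.dist_eq, sqrt_le_one_iff3, Fin.sum_univ_three]
  simp only [fmap, pt_zero, pt_one, pt_two, dist_self, Real.dist_eq, sq_abs]
  have := clamp1_bd (p 0 / wid p)
  nlinarith

lemma fmap_closed : IsClosedMap fmap := by
  have : IsProperMap fmap := by
    rw [isProperMap_iff_tendsto_cocompact]
    refine ⟨fmap_cont, ?_⟩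
    rw [← cobounded_eq_cocompact, ← tendsto_norm_atTop_iff_cobounded]
    refine Filter.tendsto_atTop_mono (f := fun p : R3 => ‖p‖ - 1) (fun p => ?_) ?_
    · have h := fmap_dist p
      rw [dist_comm, dist_eq_norm] at h
      have := norm_sub_norm_le p (fmap p)
      linarith
    · exact Filter.tendsto_atTop_add_const_right _ _ tendsto_norm_cobounded_atTop
  exact this.isClosedMap

lemma fmap_surj : Function.Surjective fmap := by
  intro q
  have hc : Continuous fun x : ℝ => x - clamp1 (x / wid q) :=
    continuous_id.sub (clamp1_cont.comp (by fun_prop))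
  have h1 := clamp1_bd ((q 0 - 1) / wid q)
  have h2 := clamp1_bd ((q 0 + 1) / wid q)
  obtain ⟨x, -, hx⟩ := intermediate_value_Icc (by linarith : q 0 - 1 ≤ q 0 + 1) hc.continuousOn
    (show q 0 ∈ Icc _ _ from ⟨by linarith, by linarith⟩)
  refine ⟨pt x (q 1) (q 2), ext3 ?_ rfl rfl⟩
  exact hx

lemma clamp_aux {a b m : ℝ} (hab : a < b) (hm : 0 ≤ m)
    (e : clamp1 b - clamp1 a = b - a + m) : (-1 ≤ a ∧ b ≤ 1) ∧ m = 0 := by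
  rcases clamp1_cases a with ⟨h1, h2⟩ | ⟨h1, h1', h2⟩ | ⟨h1, h2⟩ <;>
  rcases clamp1_cases b with ⟨h3, h4⟩ | ⟨h3, h3', h4⟩ | ⟨h3, h4⟩ <;>
  rw [h2, h4] at e <;> refine ⟨⟨?_, ?_⟩, ?_⟩ <;> linarith

lemma fmap_eq_aux {p q : R3} (h : fmap p = fmap q) : p 0 ≤ q 0 → p = q ∨ (p ∈ segA ∧ q ∈ segA) := by
  intro hle
  have e0 : p 0 - clamp1 (p 0 / wid p) = q 0 - clamp1 (q 0 / wid q) := congrArg (fun z : R3 => z 0) h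
  have e1 : p 1 = q 1 := by
    have := congrArg (fun z : R3 => z 1) h
    exact this
  have e2 : p 2 = q 2 := by
    have := congrArg (fun z : R3 => z 2) h
    exact this
  have ew : wid q = wid p := by unfold wid; rw [e1, e2]
  rw [ew] at e0
  rcases hle.eq_or_lt with hl | hl
  · exact Or.inl (ext3 hl e1 e2)
  right
  have hw := wid_ge p
  have hpos : 0 < wid p := by linarith
  set a := p 0 / wid p with ha
  set b := q 0 / wid p with hb
  have ea : p 0 = a * wid p := by rw [ha]; field_simp
  have eb : q 0 = b * wid p := by rw [hb]; field_simp
  have hab : a < b := by rw [ha, hb]; gcongr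
  have key : wid p = 1 ∧ -1 ≤ a ∧ b ≤ 1 := by
    rw [ea, eb] at e0
    obtain ⟨t, ht⟩ : ∃ t, wid p = 1 + t := ⟨wid p - 1, by ring⟩
    have ht0 : 0 ≤ t := by linarith
    rw [ht] at e0 ⊢
    have hm : 0 ≤ t * (b - a) := mul_nonneg ht0 (by linarith)
    have e : clamp1 b - clamp1 a = b - a + t * (b - a) := by linarith
    obtain ⟨hcl, hz⟩ := clamp_aux hab hm e
    refine ⟨?_, hcl⟩
    rcases mul_eq_zero.1 hz with h | h
    · rw [h]; ring
    · linarith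
  obtain ⟨k1, k2, k3⟩ := key
  have hs : p 1 = 0 ∧ p 2 = 0 := by
    unfold wid at k1
    constructor <;> nlinarith [sq_nonneg (p 1), sq_nonneg (p 2)]
  rw [k1] at ea eb
  rw [mem_segA, mem_segA]
  exact ⟨⟨⟨by linarith, by linarith⟩, hs⟩, ⟨by linarith, by linarith⟩, e1 ▸ hs.1, e2 ▸ hs.2⟩

lemma fmap_eq {p q : R3} (h : fmap p = fmap q) : p = q ∨ (p ∈ segA ∧ q ∈ segA) := by
  rcases le_total (p 0) (q 0) with hl | hl
  · exact fmap_eq_aux h hl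
  · rcases fmap_eq_aux h.symm hl with h | h
    · exact Or.inl h.symm
    · exact Or.inr h.symm

lemma fmap_seg {p : R3} (h : p ∈ segA) : fmap p = pt 0 0 0 := by
  rw [mem_segA] at h
  obtain ⟨⟨h1, h2⟩, h3, h4⟩ := h
  refine ext3 ?_ h3 h4
  have hw : wid p = 1 := by unfold wid; rw [h3, h4]; norm_num
  simp only [fmap, pt_zero, hw, div_one]
  unfold clamp1
  rw [min_eq_right h2, max_eq_right h1, sub_self]

lemma zero_mem : pt 0 0 0 ∈ segA := by
  rw [mem_segA]; exact ⟨⟨by norm_num [pt_zero], by norm_num [pt_zero]⟩, rfl, rfl⟩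

lemma mem_cb (p : R3) (c : ℝ) :
    p ∈ closedBall (pt c 0 0) 1 ↔ (p 0 - c) ^ 2 + p 1 ^ 2 + p 2 ^ 2 ≤ 1 := by
  rw [mem_closedBall, EuclideanSpace.dist_eq, sqrt_le_one_iff3, Fin.sum_univ_three]
  simp only [pt_zero, pt_one, pt_two, Real.dist_eq, sq_abs, sub_zero]

lemma fmap_right {p : R3} (h : p ∈ closedBall (pt 2 0 0) 1) :
    fmap p = pt (p 0 - 1) (p 1) (p 2) := by
  rw [mem_cb] at h
  have hw : wid p ≤ p 0 := by unfold wid; nlinarith [sq_nonneg (p 0 - 1)]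
  have hw1 := wid_ge p
  have : 1 ≤ p 0 / wid p := by rw [le_div_iff₀ (by linarith)]; linarith
  unfold fmap clamp1
  rw [min_eq_left this, max_eq_right (by norm_num)]

lemma fmap_left {p : R3} (h : p ∈ closedBall (pt (-2) 0 0) 1) :
    fmap p = pt (p 0 + 1) (p 1) (p 2) := by
  rw [mem_cb] at h
  have hw : wid p ≤ - p 0 := by unfold wid; nlinarith [sq_nonneg (p 0 + 1)]
  have hw1 := wid_ge p
  have : p 0 / wid p ≤ -1 := by rw [div_le_iff₀ (by linarith)]; linarith
  unfold fmap clamp1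
  rw [max_eq_left ((min_le_right _ _).trans this), sub_neg_eq_add]

/-- There is a continuous closed surjection of ℝ³ collapsing exactly the segment `A` to the
origin, injective off `A`, carrying the unit ball about (-2,0,0) onto the unit ball about
(-1,0,0) and the unit ball about (2,0,0) onto the unit ball about (1,0,0); consequently the
quotient ℝ³/A is homeomorphic to ℝ³. -/
theorem stmt_4 :
    ∃ f : R3 → R3,
      Continuous f ∧ IsClosedMap f ∧ Function.Surjective f ∧
      f ⁻¹' {pt 0 0 0} = segA ∧
      Set.InjOn f segAᶜ ∧
      f '' closedBall (pt (-2) 0 0) 1 = closedBall (pt (-1) 0 0) 1 ∧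
      f '' closedBall (pt 2 0 0) 1 = closedBall (pt 1 0 0) 1 ∧
      Nonempty (Quotient (collapseSetoid segA) ≃ₜ R3) := by
  have hq : Topology.IsQuotientMap fmap := fmap_closed.isQuotientMap fmap_cont fmap_surj
  refine ⟨fmap, fmap_cont, fmap_closed, fmap_surj, ?_, ?_, ?_, ?_, ?_⟩
  · ext p
    rw [mem_preimage, mem_singleton_iff]
    refine ⟨fun h => ?_, fmap_seg⟩
    rcases fmap_eq (h.trans (fmap_seg zero_mem).symm) with h | h
    · rw [h]; exact zero_mem
    · exact h.1
  · intro p hp q hq h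
    rcases fmap_eq h with h | h
    · exact h
    · exact absurd h.1 hp
  · ext q
    constructor
    · rintro ⟨p, hp, rfl⟩
      rw [fmap_left hp]
      rw [mem_cb] at hp ⊢
      simp only [pt_zero, pt_one, pt_two]
      linarith
    · intro h
      have hp : pt (q 0 - 1) (q 1) (q 2) ∈ closedBall (pt (-2) 0 0) 1 := by
        rw [mem_cb] at h ⊢
        simp only [pt_zero, pt_one, pt_two]
        linarith
      refine ⟨_, hp, ?_⟩
      rw [fmap_left hp]
      exact ext3 (by simp only [pt_zero]; ring) rfl rfl
  · ext q
    constructor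
    · rintro ⟨p, hp, rfl⟩
      rw [fmap_right hp]
      rw [mem_cb] at hp ⊢
      simp only [pt_zero, pt_one, pt_two]
      linarith
    · intro h
      have hp : pt (q 0 + 1) (q 1) (q 2) ∈ closedBall (pt 2 0 0) 1 := by
        rw [mem_cb] at h ⊢
        simp only [pt_zero, pt_one, pt_two]
        linarith
      refine ⟨_, hp, ?_⟩
      rw [fmap_right hp]
      exact ext3 (by simp only [pt_zero]; ring) rfl rfl
  · have hs : collapseSetoid segA = Setoid.ker fmap := by
      ext p q
      rw [Setoid.ker_def]
      constructor
      · rintro (h | ⟨h1, h2⟩)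
        · rw [h]
        · rw [fmap_seg h1, fmap_seg h2]
      · exact fun h => fmap_eq h
    rw [hs]
    exact ⟨Topology.IsQuotientMap.homeomorph (f := (⟨fmap, fmap_cont⟩ : C(R3, R3))) hq⟩
end
end
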